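/- arXiv:0910.1959 — 2 statements merged into one kernel-verified Lean document; each statement's English description precedes it below -/
import Mathlib

section
/- Let R be an affine root system (n = 1) of rank l in V. Let δ′ ∈ V⁰ ∖ {0} be such that ℤδ′ = (ℤR)⁰ := ℤR ∩ V⁰, and let Π′ ⊆ R with |Π′| = l be such that π(Π′) is a base of the irreducible finite root system π(R). Then there exists a unique α₀ ∈ R such that Π′ ∪ {α₀} is a base of R and α₀ = mδ′ + μ with m a positive integer and μ ∈ ℤΠ′. -/
/- ## Preliminaries: extended affine root systems (Saito) -/

noncomputable section

open Set

/-- The reflection `s_v : z ↦ z - (v^∨, z) v = z - (2 (v,z)/(v,v)) v` associated to a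
bilinear form `B` and a vector `v`.  (When `B v v = 0` this is the identity, by the
`division by zero = 0` convention; reflections are only ever used at non-isotropic `v`.) -/
def srefl {V : Type*} [AddCommGroup V] [Module ℝ V]
    (B : LinearMap.BilinForm ℝ V) (v : V) : Module.End ℝ V :=
  LinearMap.id - (((2 * (B v v)⁻¹) • (B v)).smulRight v)

/-- The Weyl group `W_S` generated by the reflections in the elements of `S`
(realized as the multiplicative closure; each generator is an involution, so this
agrees with the generated group). -/
def weyl {V : Type*} [AddCommGroup V] [Module ℝ V]
    (B : LinearMap.BilinForm ℝ V) (S : Set V) : Submonoid (Module.End ℝ V) :=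
  Submonoid.closure (srefl B '' S)

/-- The orbit `W_S · α`. -/
def worbit {V : Type*} [AddCommGroup V] [Module ℝ V]
    (B : LinearMap.BilinForm ℝ V) (S : Set V) (α : V) : Set V :=
  {v | ∃ w ∈ weyl B S, w α = v}

/-- `V⁰`, the set of isotropic vectors. -/
def nullSet {V : Type*} [AddCommGroup V] [Module ℝ V]
    (B : LinearMap.BilinForm ℝ V) : Set V := {v | B v v = 0}

/-- `ℤR`, the subgroup of `V` generated by `R`. -/
def zspan {V : Type*} [AddCommGroup V] (R : Set V) : AddSubgroup V :=
  AddSubgroup.closure R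

/-- `ℤ≥0 Π`, the set of nonnegative-integer linear combinations of elements of `Π`. -/
def nnspan {V : Type*} [AddCommMonoid V] (P : Set V) : Set V :=
  (AddSubmonoid.closure P : Set V)

/-- `(R, V)` is an `n`-extended affine root system of rank `l` (K. Saito). -/
structure IsEARS {V : Type*} [AddCommGroup V] [Module ℝ V]
    (B : LinearMap.BilinForm ℝ V) (R : Set V) (l n : ℕ) : Prop where
  rank_pos : 1 ≤ l
  findim : FiniteDimensional ℝ V
  symm : ∀ u v, B u v = B v u
  posSemidef : ∀ v, 0 ≤ B v v
  dim_eq : Module.finrank ℝ V = l + n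
  null_eq : nullSet B = (LinearMap.ker B : Set V)
  dim_null : Module.finrank ℝ (LinearMap.ker B) = n
  /-- (AX1), first half -/
  root_nonisotropic : ∀ α ∈ R, B α α ≠ 0
  /-- (AX1), second half -/
  span_eq_top : Submodule.span ℝ R = ⊤
  /-- (AX2) -/
  free : Module.Free ℤ (zspan R)
  /-- (AX2) -/
  rank_eq : Module.finrank ℤ (zspan R) = l + n
  /-- (AX3): `(α^∨, β) ∈ ℤ` -/
  integral : ∀ α ∈ R, ∀ β ∈ R, ∃ m : ℤ, 2 * B α β = (m : ℝ) * B α α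
  /-- (AX4) -/
  reflect : ∀ α ∈ R, srefl B α '' R = R
  /-- (AX5) -/
  connected : ∀ S' ⊆ R, S'.Nonempty → S' ≠ R → ∃ x ∈ S', ∃ y ∈ R \ S', B x y ≠ 0

/-- `R` is reduced, i.e. `R ∩ 2R = ∅`. -/
def IsReducedRS {V : Type*} [AddCommGroup V] [Module ℝ V] (R : Set V) : Prop :=
  ∀ α ∈ R, (2 : ℤ) • α ∉ R

/-- `Π₀` is a base (with `m` elements) of the root system `R₀`:
`Π₀ ⊆ R₀`, `Π₀` consists of `m` linearly independent elements, and
`R₀ = (R₀ ∩ ℤ≥0 Π₀) ∪ (R₀ ∩ ℤ≤0 Π₀)`. -/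
def IsBaseSet {M : Type*} [AddCommGroup M] [Module ℝ M] (R₀ P₀ : Set M) (m : ℕ) : Prop :=
  P₀ ⊆ R₀ ∧ P₀.Finite ∧ P₀.ncard = m ∧
  LinearIndependent ℝ ((↑) : P₀ → M) ∧
  R₀ = (R₀ ∩ nnspan P₀) ∪ (R₀ ∩ (-(nnspan P₀)))

/-- The bilinear form induced on a quotient `V ⧸ W` by a form vanishing on `W`. -/
def quotForm {V : Type*} [AddCommGroup V] [Module ℝ V]
    (W : Submodule ℝ V) (B : LinearMap.BilinForm ℝ V)
    (h1 : ∀ w ∈ W, B w = 0) (h2 : ∀ v : V, ∀ w ∈ W, B v w = 0) :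
    LinearMap.BilinForm ℝ (V ⧸ W) :=
  Submodule.liftQ W
    { toFun := fun v => Submodule.liftQ W (B v) (fun w hw => LinearMap.mem_ker.mpr (h2 v w hw))
      map_add' := fun u v => by
        ext x
        simp
      map_smul' := fun c v => by
        ext x
        simp }
    (fun w hw => by
      simp only [LinearMap.mem_ker]
      ext x
      simp [h1 w hw])

end

/-!
A linear function `f` on `V` that is bounded away from zero on `R` gives a positive system, and the
nonzero indecomposable elements of the monoid generated by the positive roots are its simple roots.
They generate all positive roots and are pairwise obtuse. Take `f = N L + ht`, where `ht` is the
height of `π(R)` with respect to `π(Π′)`, `L` is the level (`L(δ′) = 1` and `L = 0` on `Π′`) and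
`N` exceeds the height of every root. The simple roots of level zero are then exactly `Π′`. A simple
root of positive level is obtuse to all of `Π′`, that is, antidominant; as `π(R)` is irreducible,
two antidominant roots have a positive inner product, so only one simple root `α₀` has positive
level. Any other `β` of positive level completing `Π′` to a base gives a base of positive roots, and
such a base contains the indecomposable root `α₀`, so `β = α₀`.
-/

section Indecomposable

variable {M : Type*} [AddCommMonoid M] {N : AddSubmonoid M}

theorem mem_of_mem_closure_of_isAddIndecomposable {T : Set M} (hT : T ⊆ N) {x : M}
    (hx : x ∈ AddSubmonoid.closure T) (hx0 : x ≠ 0)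
    (hind : IsAddIndecomposable id (N : Set M) x) : x ∈ T := by
  have hle : AddSubmonoid.closure T ≤ N := AddSubmonoid.closure_le.2 hT
  induction hx using AddSubmonoid.closure_induction with
  | mem x hx => exact hx
  | zero => exact absurd rfl hx0
  | add x y hx hy ihx ihy =>
    rcases hind.2 x (hle hx) y (hle hy) rfl with rfl | rfl
    · simp only [zero_add] at *
      exact ihy hx0 hind
    · simp only [add_zero] at *
      exact ihx hx0 hind

theorem isAddIndecomposable_of_map_eq_one {f : M →+ ℝ} (hf : ∀ x ∈ N, x ≠ 0 → 1 ≤ f x) {x : M}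
    (hx : x ∈ N) (hfx : f x = 1) : IsAddIndecomposable id (N : Set M) x := by
  refine ⟨hx, fun a ha b hb hab => ?_⟩
  by_contra! hne
  have hsum : f a + f b = 1 := by rw [← map_add, ← hfx]; exact congrArg f hab.symm
  linarith [hf a ha hne.1, hf b hb hne.2]

theorem mem_closure_isAddIndecomposable {f : M →+ ℝ} (hf : ∀ x ∈ N, x ≠ 0 → 1 ≤ f x) {x : M}
    (hx : x ∈ N) :
    x ∈ AddSubmonoid.closure {y | y ≠ 0 ∧ IsAddIndecomposable id (N : Set M) y} := by
  obtain ⟨n, hn⟩ := exists_nat_ge (f x)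
  induction n generalizing x with
  | zero =>
    by_cases hx0 : x = 0
    · rw [hx0]
      exact zero_mem _
    · norm_num at hn
      linarith [hf x hx hx0]
  | succ n ih =>
    by_cases hx0 : x = 0
    · rw [hx0]
      exact zero_mem _
    by_cases hind : IsAddIndecomposable id (N : Set M) x
    · exact AddSubmonoid.subset_closure ⟨hx0, hind⟩
    obtain ⟨a, ha, b, hb, rfl, ha0, hb0⟩ :
        ∃ a ∈ N, ∃ b ∈ N, x = a + b ∧ a ≠ 0 ∧ b ≠ 0 := by
      by_contra! hc
      exact hind ⟨hx, fun a ha b hb hab => or_iff_not_imp_left.2 (hc a ha b hb hab)⟩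
    rw [map_add, Nat.cast_succ] at hn
    exact add_mem (ih ha (by linarith [hf b hb hb0])) (ih hb (by linarith [hf a ha ha0]))

theorem one_le_map_of_mem_closure {S : Set M} {f : M →+ ℝ} (hf : ∀ s ∈ S, 1 ≤ f s) {x : M}
    (hx : x ∈ AddSubmonoid.closure S) (hx0 : x ≠ 0) : 1 ≤ f x := by
  suffices h : x = 0 ∨ 1 ≤ f x from h.resolve_left hx0
  clear hx0
  induction hx using AddSubmonoid.closure_induction with
  | mem x hx => exact Or.inr (hf x hx)
  | zero => exact Or.inl rfl
  | add x y _ _ hx hy =>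
    rcases hx with rfl | hx
    · simpa only [zero_add] using hy
    rcases hy with rfl | hy
    · simpa only [add_zero] using Or.inr hx
    · exact Or.inr (by rw [map_add]; linarith)

end Indecomposable

namespace IsEARS

variable {V : Type*} [AddCommGroup V] [Module ℝ V] {B : LinearMap.BilinForm ℝ V} {R : Set V}
  {l n : ℕ} {α β κ : V}

theorem mem_ker_iff_apply_self_eq_zero (h : IsEARS B R l n) :
    α ∈ LinearMap.ker B ↔ B α α = 0 := by
  rw [← SetLike.mem_coe, ← h.null_eq]
  rfl

theorem notMem_ker (h : IsEARS B R l n) (hα : α ∈ R) : α ∉ LinearMap.ker B := fun hker =>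
  h.root_nonisotropic α hα (h.mem_ker_iff_apply_self_eq_zero.1 hker)

theorem apply_self_pos (h : IsEARS B R l n) (hα : α ∈ R) : 0 < B α α :=
  (h.posSemidef α).lt_of_ne' (h.root_nonisotropic α hα)

theorem sub_zsmul_mem (h : IsEARS B R l n) (hα : α ∈ R) (hβ : β ∈ R) {m : ℤ}
    (hm : 2 * B α β = m * B α α) : β - m • α ∈ R := by
  have hcoeff : 2 * (B α α)⁻¹ * B α β = m := by
    have := h.root_nonisotropic α hα
    field_simp
    linarith
  rw [← h.reflect α hα]
  exact ⟨β, hβ, by simp [srefl, hcoeff, Int.cast_smul_eq_zsmul]⟩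

theorem neg_mem (h : IsEARS B R l n) (hα : α ∈ R) : -α ∈ R := by
  have hmem := h.sub_zsmul_mem hα hα (m := 2) (by norm_num)
  rwa [show α - (2 : ℤ) • α = -α by module] at hmem

theorem sub_mem_or_mem_ker (h : IsEARS B R l n) (hα : α ∈ R) (hβ : β ∈ R) (hpos : 0 < B α β) :
    α - β ∈ R ∨ α - β ∈ LinearMap.ker B := by
  obtain ⟨m, hm⟩ := h.integral α hα β hβ
  obtain ⟨k, hk⟩ := h.integral β hβ α hα
  rw [h.symm β α] at hk
  have one_le_of_pairing : ∀ (z : ℤ) (γ : V), 2 * B α β = z * B γ γ → 1 ≤ z := by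
    intro z γ hz
    have : (0 : ℝ) < z := pos_of_mul_pos_left (hz ▸ by positivity) (h.posSemidef γ)
    exact_mod_cast this
  rcases (one_le_of_pairing m α hm).eq_or_lt with rfl | hm2
  · left
    have hmem := h.neg_mem (h.sub_zsmul_mem hα hβ hm)
    rwa [one_smul, neg_sub] at hmem
  rcases (one_le_of_pairing k β hk).eq_or_lt with rfl | hk2
  · left
    have hmem := h.sub_zsmul_mem hβ hα ((h.symm β α).symm ▸ hk)
    rwa [one_smul] at hmem
  right
  have hm2' : (2 : ℝ) ≤ m := by exact_mod_cast hm2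
  have hk2' : (2 : ℝ) ≤ k := by exact_mod_cast hk2
  have hαle : B α α ≤ B α β := by nlinarith [h.posSemidef α]
  have hβle : B β β ≤ B α β := by nlinarith [h.posSemidef β]
  rw [h.mem_ker_iff_apply_self_eq_zero]
  refine le_antisymm ?_ (h.posSemidef _)
  simp only [map_sub, LinearMap.sub_apply, h.symm β α]
  linarith

theorem apply_self_le_two_mul_abs (h : IsEARS B R l n) (hα : α ∈ R) (hβ : β ∈ R)
    (hne : B α β ≠ 0) : B β β ≤ 2 * |B α β| := by
  obtain ⟨k, hk⟩ := h.integral β hβ α hα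
  rw [h.symm β α] at hk
  have hk0 : k ≠ 0 := by
    rintro rfl
    exact hne (by simpa using hk)
  have hk1 : (1 : ℝ) ≤ |(k : ℝ)| := by exact_mod_cast Int.one_le_abs hk0
  calc B β β ≤ |(k : ℝ)| * B β β := le_mul_of_one_le_left (h.posSemidef β) hk1
    _ = |2 * B α β| := by rw [hk, abs_mul, abs_of_nonneg (h.posSemidef β)]
    _ = 2 * |B α β| := by rw [abs_mul, abs_two]

theorem abs_apply_le (h : IsEARS B R l n) (hα : α ∈ R) (hβ : β ∈ R) :
    |B α β| ≤ 2 * B α α := by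
  by_cases hne : B α β = 0
  · rw [hne, abs_zero]
    exact mul_nonneg zero_le_two (h.posSemidef α)
  refine le_of_mul_le_mul_right ?_ (abs_pos.2 hne)
  have cauchy_schwarz : B α β * B α β ≤ B α α * B β β := by
    simpa only [h.symm β α] using
      LinearMap.BilinForm.apply_mul_apply_le_of_forall_zero_le B h.posSemidef α β
  calc |B α β| * |B α β| = B α β * B α β := abs_mul_abs_self _
    _ ≤ B α α * B β β := cauchy_schwarz
    _ ≤ B α α * (2 * |B α β|) :=
      mul_le_mul_of_nonneg_left (h.apply_self_le_two_mul_abs hα hβ hne) (h.posSemidef α)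
    _ = 2 * B α α * |B α β| := by ring

-- Since `κ` is radical, the reflection in `α - (k + 1) • κ` sends `α - k • κ` to
-- `-(α - (k + 2) • κ)`.
theorem sub_nsmul_mem (h : IsEARS B R l n) (hα : α ∈ R) (hκ : κ ∈ LinearMap.ker B)
    (hακ : α - κ ∈ R) (k : ℕ) : α - k • κ ∈ R := by
  have hκB : ∀ v, B κ v = 0 := fun v => by rw [LinearMap.mem_ker.1 hκ, LinearMap.zero_apply]
  induction k using Nat.twoStepInduction with
  | zero => simpa only [zero_smul, sub_zero] using hα
  | one => simpa only [one_smul] using hακ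
  | more k ih ih' =>
    have hmem := h.neg_mem (h.sub_zsmul_mem ih' ih (m := 2)
      (by simp [hκB, h.symm _ κ]))
    convert hmem using 1
    module

end IsEARS

/-- A family `e` of roots whose images form a base of `π(R)`, together with the coordinates `c` on
`V` modulo the radical `ker B = V⁰` in the basis of these images. -/
structure IsBaseModRadical {V ι : Type*} [AddCommGroup V] [Module ℝ V] [DecidableEq ι]
    (B : LinearMap.BilinForm ℝ V) (R : Set V) (e : ι → V) (c : V →ₗ[ℝ] ι → ℝ) : Prop where
  root_mem : ∀ i, e i ∈ R
  coord_base : ∀ i, c (e i) = Pi.single i 1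
  ker_coord : LinearMap.ker c = LinearMap.ker B
  coord_eq_natCast_or : ∀ γ ∈ R, ∃ k : ι → ℕ, (∀ i, c γ i = k i) ∨ ∀ i, c γ i = -k i

/-- The sum of the coordinates `c`, i.e. the height with respect to a base of `π(R)`. -/
def coordSum {V ι : Type*} [AddCommGroup V] [Module ℝ V] [Fintype ι] (c : V →ₗ[ℝ] ι → ℝ) :
    V →ₗ[ℝ] ℝ :=
  ∑ i, LinearMap.proj i ∘ₗ c

theorem coordSum_apply {V ι : Type*} [AddCommGroup V] [Module ℝ V] [Fintype ι]
    (c : V →ₗ[ℝ] ι → ℝ) (v : V) : coordSum c v = ∑ i, c v i := by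
  simp [coordSum, LinearMap.sum_apply]

namespace IsBaseModRadical

variable {V ι : Type*} [AddCommGroup V] [Module ℝ V] [DecidableEq ι]
  {B : LinearMap.BilinForm ℝ V} {R : Set V} {l n : ℕ} {e : ι → V} {c : V →ₗ[ℝ] ι → ℝ}
  {α β γ : V} {J : Set ι} {i : ι}

theorem linearIndependent_coord_base (hb : IsBaseModRadical B R e c) :
    LinearIndependent ℝ (c ∘ e) := by
  rw [show c ∘ e = fun i => Pi.single i 1 from funext hb.coord_base]
  exact Pi.linearIndependent_single_one ι ℝ

theorem linearIndependent (hb : IsBaseModRadical B R e c) : LinearIndependent ℝ e :=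
  hb.linearIndependent_coord_base.of_comp c

theorem coord_eq_intCast (hb : IsBaseModRadical B R e c) (hγ : γ ∈ R) :
    ∃ z : ι → ℤ, ∀ i, c γ i = z i := by
  obtain ⟨k, hk | hk⟩ := hb.coord_eq_natCast_or γ hγ
  · exact ⟨fun i => k i, fun i => by rw [hk, Int.cast_natCast]⟩
  · exact ⟨fun i => -k i, fun i => by rw [hk, Int.cast_neg, Int.cast_natCast]⟩

theorem coord_nonneg_or_nonpos (hb : IsBaseModRadical B R e c) (hγ : γ ∈ R) :
    0 ≤ c γ ∨ c γ ≤ 0 := by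
  obtain ⟨k, hk | hk⟩ := hb.coord_eq_natCast_or γ hγ
  · exact Or.inl fun i => (hk i).symm ▸ Nat.cast_nonneg _
  · exact Or.inr fun i => (hk i).symm ▸ neg_nonpos.2 (Nat.cast_nonneg _)

theorem coord_nonneg_of_pos (hb : IsBaseModRadical B R e c) (hγ : γ ∈ R) (hi : 0 < c γ i) :
    0 ≤ c γ :=
  (hb.coord_nonneg_or_nonpos hγ).resolve_right fun hle => (hle i).not_gt hi

theorem coord_nonpos_of_neg (hb : IsBaseModRadical B R e c) (hγ : γ ∈ R) (hi : c γ i < 0) :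
    c γ ≤ 0 :=
  (hb.coord_nonneg_or_nonpos hγ).resolve_left fun hle => (hle i).not_gt hi

theorem coord_ne_zero (hb : IsBaseModRadical B R e c) (h : IsEARS B R l n) (hγ : γ ∈ R) :
    c γ ≠ 0 := fun hzero =>
  h.notMem_ker hγ (hb.ker_coord ▸ LinearMap.mem_ker.2 hzero)

theorem coord_base_apply (hb : IsBaseModRadical B R e c) (i j : ι) :
    c (e i) j = (Pi.single i 1 : ι → ℝ) j :=
  congrFun (hb.coord_base i) j

theorem coord_sub_base_apply (hb : IsBaseModRadical B R e c) (v : V) (i j : ι) :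
    c (v - e i) j = c v j - (Pi.single i 1 : ι → ℝ) j := by
  rw [map_sub, Pi.sub_apply, hb.coord_base_apply]

theorem apply_base_nonpos (hb : IsBaseModRadical B R e c) (h : IsEARS B R l n) {i j : ι}
    (hij : i ≠ j) : B (e i) (e j) ≤ 0 := by
  by_contra! hpos
  have hci : 0 < c (e i - e j) i := by simp [hb.coord_sub_base_apply, hb.coord_base_apply, hij]
  have hcj : c (e i - e j) j < 0 := by
    simp [hb.coord_sub_base_apply, hb.coord_base_apply, hij.symm]
  rcases h.sub_mem_or_mem_ker (hb.root_mem i) (hb.root_mem j) hpos with hR | hker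
  · exact (hb.coord_nonneg_of_pos hR hci j).not_gt hcj
  · rw [← hb.ker_coord, LinearMap.mem_ker] at hker
    exact hci.ne' (congrFun hker i)

theorem sub_base_mem (hb : IsBaseModRadical B R e c) (h : IsEARS B R l n) (hγ : γ ∈ R)
    (hi : 0 < B (e i) γ) {j : ι} (hji : j ≠ i) (hj : c γ j ≠ 0) : γ - e i ∈ R := by
  refine (h.sub_mem_or_mem_ker hγ (hb.root_mem i) (h.symm _ _ ▸ hi)).resolve_right fun hker => hj ?_
  rw [← hb.ker_coord, LinearMap.mem_ker] at hker
  simpa [hb.coord_sub_base_apply, hji] using congrFun hker j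

-- `β + e i` would reflect to `β - e i`, whose coordinates have both signs.
theorem add_base_notMem (hb : IsBaseModRadical B R e c) (h : IsEARS B R l n) (hβ : β ∈ R)
    (hβ0 : 0 ≤ c β) (hi : c β i = 0) (horth : B (e i) β = 0) : β + e i ∉ R := by
  intro hmem
  have hreflect := h.sub_zsmul_mem (hb.root_mem i) hmem (m := 2) (by simp [horth])
  rw [show β + e i - (2 : ℤ) • e i = β - e i by module] at hreflect
  have hneg := hb.coord_nonpos_of_neg (i := i) hreflect (by simp [hb.coord_sub_base_apply, hi])
  refine hb.coord_ne_zero h hβ (funext fun k => le_antisymm ?_ (hβ0 k))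
  by_cases hk : k = i
  · exact hk ▸ hi.le
  · simpa [hb.coord_sub_base_apply, hk] using hneg k

theorem sub_sum_coord_smul_mem_ker [Fintype ι] (hb : IsBaseModRadical B R e c) (v : V) :
    v - ∑ i, c v i • e i ∈ LinearMap.ker B := by
  rw [← hb.ker_coord, LinearMap.mem_ker, map_sub, map_sum]
  simp only [map_smul, hb.coord_base]
  rw [← pi_eq_sum_univ' (c v), sub_self]

theorem apply_eq_sum_coord [Fintype ι] (hb : IsBaseModRadical B R e c) (v w : V) :
    B v w = ∑ i, c v i * B (e i) w := by
  have hker := LinearMap.congr_fun (LinearMap.mem_ker.1 (hb.sub_sum_coord_smul_mem_ker v)) w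
  simpa [sub_eq_zero, LinearMap.sum_apply] using hker

section Finite

variable [Finite ι]

theorem apply_base_eq_zero_of_orthogonal (hb : IsBaseModRadical B R e c) (h : IsEARS B R l n)
    (hβ : ∀ j, c β j = 0 ∨ B (e i) (e j) = 0) : B (e i) β = 0 := by
  cases nonempty_fintype ι
  rw [h.symm, hb.apply_eq_sum_coord]
  refine Finset.sum_eq_zero fun j _ => ?_
  rcases hβ j with hj | hj
  · rw [hj, zero_mul]
  · rw [h.symm, hj, mul_zero]

theorem exists_apply_base_pos (hb : IsBaseModRadical B R e c) (h : IsEARS B R l n)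
    (hγ : γ ∈ R) (hγ0 : 0 ≤ c γ) : ∃ i, 0 < B (e i) γ := by
  cases nonempty_fintype ι
  by_contra! hle
  refine (h.apply_self_pos hγ).not_ge ?_
  rw [hb.apply_eq_sum_coord]
  exact Finset.sum_nonpos fun i _ => mul_nonpos_of_nonneg_of_nonpos (hγ0 i) (hle i)

theorem coord_add_base_eq_zero_on (hb : IsBaseModRadical B R e c) (h : IsEARS B R l n)
    (hJ : ∀ i ∈ J, ∀ j ∉ J, B (e i) (e j) = 0) (hβ : β ∈ R) (hβ0 : 0 ≤ c β)
    (hon : ∀ j ∈ J, c β j = 0) (hadd : β + e i ∈ R) : ∀ j ∈ J, c (β + e i) j = 0 := by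
  have hiJ : i ∉ J := fun hiJ =>
    hb.add_base_notMem h hβ hβ0 (hon i hiJ)
      (hb.apply_base_eq_zero_of_orthogonal h fun j => (em (j ∈ J)).imp (hon j) (hJ i hiJ j)) hadd
  intro j hj
  have hji : j ≠ i := fun hji => hiJ (hji ▸ hj)
  simp [hb.coord_base_apply, hon j hj, hji]

theorem coord_eq_zero_on_or_off_of_nonneg (hb : IsBaseModRadical B R e c) (h : IsEARS B R l n)
    (hJ : ∀ i ∈ J, ∀ j ∉ J, B (e i) (e j) = 0) (hγ : γ ∈ R) (hγ0 : 0 ≤ c γ) :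
    (∀ i ∈ J, c γ i = 0) ∨ ∀ i ∉ J, c γ i = 0 := by
  cases nonempty_fintype ι
  obtain ⟨m, hm⟩ := exists_nat_gt (∑ i, c γ i)
  induction m generalizing γ with
  | zero => exact absurd hm (by simpa using Finset.sum_nonneg fun i _ => hγ0 i)
  | succ m ih =>
    obtain ⟨i, hi⟩ := hb.exists_apply_base_pos h hγ hγ0
    by_cases hzero : ∀ j ≠ i, c γ j = 0
    · by_cases hiJ : i ∈ J
      · exact Or.inr fun j hj => hzero j (fun hji => hj (hji ▸ hiJ))
      · exact Or.inl fun j hj => hzero j (fun hji => hiJ (hji ▸ hj))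
    push Not at hzero
    obtain ⟨k, hki, hk⟩ := hzero
    have hsub : γ - e i ∈ R := hb.sub_base_mem h hγ hi hki hk
    have hsub0 : 0 ≤ c (γ - e i) := hb.coord_nonneg_of_pos (i := k) hsub
      (by simpa [hb.coord_sub_base_apply, hki] using (hγ0 k).lt_of_ne' hk)
    have hheight : ∑ j, c (γ - e i) j < m := by
      simp only [hb.coord_sub_base_apply, Finset.sum_sub_distrib, Finset.sum_pi_single',
        Finset.mem_univ, if_true]
      push_cast at hm
      linarith
    rw [← sub_add_cancel γ (e i)] at hγ ⊢
    refine (ih hsub hsub0 hheight).imp (fun hon => ?_) fun hoff => ?_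
    · exact hb.coord_add_base_eq_zero_on h hJ hsub hsub0 hon hγ
    · exact hb.coord_add_base_eq_zero_on (J := Jᶜ) h
        (fun i hi j hj => (h.symm _ _).trans (hJ j (not_not.1 hj) i hi)) hsub hsub0 hoff hγ

theorem coord_eq_zero_on_or_off (hb : IsBaseModRadical B R e c) (h : IsEARS B R l n)
    (hJ : ∀ i ∈ J, ∀ j ∉ J, B (e i) (e j) = 0) (hγ : γ ∈ R) :
    (∀ i ∈ J, c γ i = 0) ∨ ∀ i ∉ J, c γ i = 0 := by
  rcases hb.coord_nonneg_or_nonpos hγ with h0 | h0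
  · exact hb.coord_eq_zero_on_or_off_of_nonneg h hJ hγ h0
  · simpa only [map_neg, Pi.neg_apply, neg_eq_zero] using
      hb.coord_eq_zero_on_or_off_of_nonneg h hJ (h.neg_mem hγ) (by simpa using h0)

theorem eq_univ_of_orthogonal_compl (hb : IsBaseModRadical B R e c) (h : IsEARS B R l n)
    (hJne : J.Nonempty) (hJ : ∀ i ∈ J, ∀ j ∉ J, B (e i) (e j) = 0) : J = Set.univ := by
  cases nonempty_fintype ι
  refine Set.eq_univ_of_forall fun k => ?_
  by_contra hk
  let S : Set V := {γ ∈ R | ∀ i ∉ J, c γ i = 0}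
  have hS_nonempty : S.Nonempty := by
    obtain ⟨j, hj⟩ := hJne
    refine ⟨e j, hb.root_mem j, fun i hi => ?_⟩
    rw [hb.coord_base_apply, Pi.single_eq_of_ne (ne_of_mem_of_not_mem hj hi).symm]
  have hS_ne : S ≠ R := fun heq => by
    have hek := (heq.ge (hb.root_mem k)).2 k hk
    rw [hb.coord_base_apply, Pi.single_eq_same] at hek
    exact one_ne_zero hek
  obtain ⟨x, ⟨-, hx⟩, y, ⟨hyR, hy⟩, hxy⟩ := h.connected S (fun _ hγ => hγ.1) hS_nonempty hS_ne
  have hyJ : ∀ j ∈ J, c y j = 0 :=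
    (hb.coord_eq_zero_on_or_off h hJ hyR).resolve_right fun hoff => hy ⟨hyR, hoff⟩
  refine hxy ?_
  rw [hb.apply_eq_sum_coord]
  refine Finset.sum_eq_zero fun i _ => ?_
  by_cases hi : i ∈ J
  · rw [hb.apply_base_eq_zero_of_orthogonal h fun j => (em (j ∈ J)).imp (hyJ j) (hJ i hi j),
      mul_zero]
  · rw [hx i hi, zero_mul]

theorem coord_nonpos_of_antidominant (hb : IsBaseModRadical B R e c) (h : IsEARS B R l n)
    (hα : α ∈ R) (hanti : ∀ i, B (e i) α ≤ 0) : c α ≤ 0 := by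
  refine (hb.coord_nonneg_or_nonpos hα).resolve_left fun hpos => ?_
  obtain ⟨i, hi⟩ := hb.exists_apply_base_pos h hα hpos
  exact (hanti i).not_gt hi

theorem coord_neg_of_antidominant (hb : IsBaseModRadical B R e c) (h : IsEARS B R l n)
    (hα : α ∈ R) (hanti : ∀ i, B (e i) α ≤ 0) (i : ι) : c α i < 0 := by
  cases nonempty_fintype ι
  have hnonpos := hb.coord_nonpos_of_antidominant h hα hanti
  have hne : {i | c α i ≠ 0}.Nonempty := Function.ne_iff.1 (hb.coord_ne_zero h hα)
  have horth : ∀ i ∈ {i | c α i ≠ 0}, ∀ j ∉ {i | c α i ≠ 0}, B (e i) (e j) = 0 := by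
    intro i hi j hj
    have hterm : ∀ k ∈ Finset.univ, 0 ≤ c α k * B (e k) (e j) := by
      intro k _
      by_cases hkj : k = j
      · rw [hkj, not_not.1 hj, zero_mul]
      · exact mul_nonneg_of_nonpos_of_nonpos (hnonpos k) (hb.apply_base_nonpos h hkj)
    have hsum : ∑ k, c α k * B (e k) (e j) = 0 := by
      refine le_antisymm ?_ (Finset.sum_nonneg hterm)
      rw [← hb.apply_eq_sum_coord, h.symm]
      exact hanti j
    exact (mul_eq_zero.1 ((Finset.sum_eq_zero_iff_of_nonneg hterm).1 hsum i
      (Finset.mem_univ i))).resolve_left hi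
  have huniv := hb.eq_univ_of_orthogonal_compl h hne horth
  exact (hnonpos i).lt_of_ne (huniv ▸ Set.mem_univ i : i ∈ {i | c α i ≠ 0})

theorem apply_pos_of_antidominant (hb : IsBaseModRadical B R e c) (h : IsEARS B R l n)
    (hα : α ∈ R) (hβ : β ∈ R) (hαanti : ∀ i, B (e i) α ≤ 0) (hβanti : ∀ i, B (e i) β ≤ 0) :
    0 < B α β := by
  cases nonempty_fintype ι
  obtain ⟨i, hi⟩ : ∃ i, B (e i) β < 0 := by
    by_contra! hge
    refine h.root_nonisotropic β hβ ?_
    rw [hb.apply_eq_sum_coord]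
    exact Finset.sum_eq_zero fun i _ => by rw [le_antisymm (hβanti i) (hge i), mul_zero]
  have hcoord := hb.coord_neg_of_antidominant h hα hαanti
  rw [hb.apply_eq_sum_coord]
  exact Finset.sum_pos' (fun j _ => mul_nonneg_of_nonpos_of_nonpos (hcoord j).le (hβanti j))
    ⟨i, Finset.mem_univ i, mul_pos_of_neg_of_neg (hcoord i) hi⟩

end Finite

section Height

variable [Fintype ι]

theorem one_le_coordSum_of_nonneg (hb : IsBaseModRadical B R e c) (h : IsEARS B R l n)
    (hγ : γ ∈ R) (hγ0 : 0 ≤ c γ) : 1 ≤ coordSum c γ := by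
  obtain ⟨z, hz⟩ := hb.coord_eq_intCast hγ
  have hpos : 0 < coordSum c γ := by
    rw [coordSum_apply]
    exact Fintype.sum_pos (hγ0.lt_of_ne' (hb.coord_ne_zero h hγ))
  simp only [coordSum_apply, hz] at hpos ⊢
  exact_mod_cast hpos

theorem one_le_abs_coordSum (hb : IsBaseModRadical B R e c) (h : IsEARS B R l n) (hγ : γ ∈ R) :
    1 ≤ |coordSum c γ| := by
  rcases hb.coord_nonneg_or_nonpos hγ with h0 | h0
  · exact (hb.one_le_coordSum_of_nonneg h hγ h0).trans (le_abs_self _)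
  · rw [← abs_neg, ← map_neg]
    exact (hb.one_le_coordSum_of_nonneg h (h.neg_mem hγ) (by simpa using h0)).trans
      (le_abs_self _)

theorem coordSum_mem_span (hb : IsBaseModRadical B R e c) (h : IsEARS B R l n) :
    coordSum c ∈ Submodule.span ℝ (Set.range fun i => B (e i)) := by
  refine mem_span_of_iInf_ker_le_ker fun v hv => ?_
  have hv' : ∀ i, B (e i) v = 0 := by simpa using hv
  have hker : v ∈ LinearMap.ker B := by
    rw [h.mem_ker_iff_apply_self_eq_zero, hb.apply_eq_sum_coord]
    exact Finset.sum_eq_zero fun i _ => by rw [hv', mul_zero]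
  rw [← hb.ker_coord, LinearMap.mem_ker] at hker
  simp [coordSum_apply, hker]

theorem exists_forall_abs_coordSum_add_one_le (hb : IsBaseModRadical B R e c)
    (h : IsEARS B R l n) : ∃ N : ℝ, ∀ γ ∈ R, |coordSum c γ| + 1 ≤ N := by
  obtain ⟨a, ha⟩ := (Submodule.mem_span_range_iff_exists_fun ℝ).1 (hb.coordSum_mem_span h)
  refine ⟨∑ i, |a i| * (2 * B (e i) (e i)) + 1, fun γ hγ => add_le_add_left ?_ 1⟩
  calc |coordSum c γ| = |∑ i, a i * B (e i) γ| := by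
        rw [← ha]
        simp [LinearMap.sum_apply]
    _ ≤ ∑ i, |a i * B (e i) γ| := Finset.abs_sum_le_sum_abs _ _
    _ ≤ ∑ i, |a i| * (2 * B (e i) (e i)) := Finset.sum_le_sum fun i _ => by
        rw [abs_mul]
        exact mul_le_mul_of_nonneg_left (h.abs_apply_le (hb.root_mem i) hγ) (abs_nonneg _)

end Height

end IsBaseModRadical

section SimpleRoots

variable {V : Type*} [AddCommGroup V] [Module ℝ V] {B : LinearMap.BilinForm ℝ V} {R : Set V}
  {l n : ℕ} {f : V →ₗ[ℝ] ℝ} {α β γ κ : V}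

/-- The additive monoid generated by the roots that are positive with respect to `f`. -/
def positiveMonoid (R : Set V) (f : V →ₗ[ℝ] ℝ) : AddSubmonoid V :=
  AddSubmonoid.closure {γ ∈ R | 0 < f γ}

/-- The simple roots of the positive system defined by `f`. Indecomposability is required in the
whole monoid generated by the positive roots, not only among the positive roots. -/
def simpleRoots (R : Set V) (f : V →ₗ[ℝ] ℝ) : Set V :=
  {α | α ≠ 0 ∧ IsAddIndecomposable id (positiveMonoid R f : Set V) α}

theorem simpleRoots_subset : simpleRoots R f ⊆ {γ ∈ R | 0 < f γ} := fun _ hα =>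
  mem_of_mem_closure_of_isAddIndecomposable AddSubmonoid.subset_closure hα.2.1 hα.1 hα.2

theorem mem_of_mem_closure_of_mem_simpleRoots {T : Set V} (hT : T ⊆ {γ ∈ R | 0 < f γ})
    (hα : α ∈ simpleRoots R f) (hαT : α ∈ AddSubmonoid.closure T) : α ∈ T :=
  mem_of_mem_closure_of_isAddIndecomposable (hT.trans AddSubmonoid.subset_closure) hαT hα.1 hα.2

theorem one_le_of_mem_positiveMonoid (hf : ∀ γ ∈ R, 1 ≤ |f γ|) (hγ : γ ∈ positiveMonoid R f)
    (hγ0 : γ ≠ 0) : 1 ≤ f γ :=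
  one_le_map_of_mem_closure (f := f.toAddMonoidHom)
    (fun β (hβ : β ∈ R ∧ 0 < f β) => abs_of_pos hβ.2 ▸ hf β hβ.1) hγ hγ0

theorem mem_closure_simpleRoots (hf : ∀ γ ∈ R, 1 ≤ |f γ|) (hγ : γ ∈ R) (hpos : 0 < f γ) :
    γ ∈ AddSubmonoid.closure (simpleRoots R f) :=
  mem_closure_isAddIndecomposable (f := f.toAddMonoidHom)
    (fun _ => one_le_of_mem_positiveMonoid hf) (AddSubmonoid.subset_closure ⟨hγ, hpos⟩)

theorem mem_simpleRoots_of_eq_one (hf : ∀ γ ∈ R, 1 ≤ |f γ|) (hγ : γ ∈ R) (hγ1 : f γ = 1) :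
    γ ∈ simpleRoots R f := by
  refine ⟨fun h0 => by simp [h0] at hγ1, ?_⟩
  exact isAddIndecomposable_of_map_eq_one (f := f.toAddMonoidHom)
    (fun _ => one_le_of_mem_positiveMonoid hf)
    (AddSubmonoid.subset_closure ⟨hγ, hγ1 ▸ one_pos⟩) hγ1

theorem mem_closure_simpleRoots_or_neg (h : IsEARS B R l n) (hf : ∀ γ ∈ R, 1 ≤ |f γ|)
    (hγ : γ ∈ R) : γ ∈ AddSubmonoid.closure (simpleRoots R f) ∨
      -γ ∈ AddSubmonoid.closure (simpleRoots R f) := by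
  rcases lt_or_gt_of_ne (abs_pos.1 (one_pos.trans_le (hf γ hγ))) with hneg | hpos
  · exact Or.inr (mem_closure_simpleRoots hf (h.neg_mem hγ) (by simpa using hneg))
  · exact Or.inl (mem_closure_simpleRoots hf hγ hpos)

-- `κ` is the difference of the consecutive terms of the string `α - k • κ` between which `f`
-- changes sign.
theorem mem_positiveMonoid_of_sub_mem (h : IsEARS B R l n) (hf : ∀ γ ∈ R, f γ ≠ 0) (hα : α ∈ R)
    (hκ : κ ∈ LinearMap.ker B) (hακ : α - κ ∈ R) (hfα : 0 < f α) (hfκ : 0 < f κ) :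
    κ ∈ positiveMonoid R f := by
  have string_apply : ∀ k : ℕ, f (α - k • κ) = f α - k * f κ := fun k => by simp
  let k := ⌊f α / f κ⌋₊
  have hk : α - k • κ ∈ R := h.sub_nsmul_mem hα hκ hακ k
  have hk_nonneg : 0 ≤ f (α - k • κ) := by
    rw [string_apply, sub_nonneg, ← le_div_iff₀ hfκ]
    exact Nat.floor_le (by positivity)
  have hk_neg : f (α - (k + 1) • κ) < 0 := by
    rw [string_apply, sub_neg, ← div_lt_iff₀ hfκ, Nat.cast_succ]
    exact Nat.lt_floor_add_one _
  rw [show κ = (α - k • κ) + -(α - (k + 1) • κ) by module]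
  refine add_mem (AddSubmonoid.subset_closure ⟨hk, hk_nonneg.lt_of_ne' (hf _ hk)⟩)
    (AddSubmonoid.subset_closure ⟨h.neg_mem (h.sub_nsmul_mem hα hκ hακ _), ?_⟩)
  simpa only [map_neg, neg_pos] using hk_neg

theorem sub_notMem_positiveMonoid (hα : α ∈ simpleRoots R f) (hβ : β ∈ simpleRoots R f)
    (hne : α ≠ β) : α - β ∉ positiveMonoid R f := fun hsub =>
  (hα.2.2 _ hsub β hβ.2.1 (sub_add_cancel α β).symm).elim (hne ∘ sub_eq_zero.1) hβ.1

theorem apply_nonpos_of_mem_simpleRoots (h : IsEARS B R l n) (hf : ∀ γ ∈ R, f γ ≠ 0)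
    (hdisj : Disjoint (LinearMap.ker B) (LinearMap.ker f)) (hα : α ∈ simpleRoots R f)
    (hβ : β ∈ simpleRoots R f) (hne : α ≠ β) : B α β ≤ 0 := by
  by_contra! hpos
  obtain ⟨hαR, hfα⟩ := simpleRoots_subset hα
  have hβR := (simpleRoots_subset hβ).1
  have hdiff := h.sub_mem_or_mem_ker hαR hβR hpos
  have hf_ne : f α ≠ f β := by
    rw [← sub_ne_zero, ← map_sub]
    refine hdiff.elim (hf _) fun hker hzero => hne (sub_eq_zero.1 ?_)
    exact Submodule.disjoint_def.1 hdisj _ hker hzero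
  wlog hlt : f β < f α generalizing α β with hwlog
  · have hpos' : 0 < B β α := h.symm α β ▸ hpos
    exact hwlog hβ hα hne.symm hpos' hβR (simpleRoots_subset hβ).2 hαR
      (h.sub_mem_or_mem_ker hβR hαR hpos') hf_ne.symm (hf_ne.lt_of_le (not_lt.1 hlt))
  refine sub_notMem_positiveMonoid hα hβ hne ?_
  have hsub_pos : 0 < f (α - β) := by rwa [map_sub, sub_pos]
  rcases hdiff with hR | hker
  · exact AddSubmonoid.subset_closure ⟨hR, hsub_pos⟩
  · exact mem_positiveMonoid_of_sub_mem h hf hαR hker (by rwa [sub_sub_cancel]) hfα hsub_pos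

end SimpleRoots

/-- A linear function `L` measuring the level of a vector above the span of the family `e` in the
direction of the radical, normalised to be integral on `R`. -/
structure IsLevelFunction {V ι : Type*} [AddCommGroup V] [Module ℝ V]
    (B : LinearMap.BilinForm ℝ V) (R : Set V) (e : ι → V) (L : V →ₗ[ℝ] ℝ) : Prop where
  level_base : ∀ i, L (e i) = 0
  level_eq_intCast : ∀ γ ∈ R, ∃ k : ℤ, L γ = k
  disjoint_ker : Disjoint (LinearMap.ker B) (LinearMap.ker L)

/-- The height `v ↦ N L(v) + ht(π(v))`. For large `N` it is positive exactly on the roots of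
positive level and on the roots of level zero that are positive in `π(R)`. -/
def affineHeight {V ι : Type*} [AddCommGroup V] [Module ℝ V] [Fintype ι]
    (c : V →ₗ[ℝ] ι → ℝ) (L : V →ₗ[ℝ] ℝ) (N : ℝ) : V →ₗ[ℝ] ℝ :=
  N • L + coordSum c

theorem affineHeight_apply {V ι : Type*} [AddCommGroup V] [Module ℝ V] [Fintype ι]
    (c : V →ₗ[ℝ] ι → ℝ) (L : V →ₗ[ℝ] ℝ) (N : ℝ) (v : V) :
    affineHeight c L N v = N * L v + coordSum c v :=
  rfl

namespace IsLevelFunction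

variable {V ι : Type*} [AddCommGroup V] [Module ℝ V] [Fintype ι]
  {B : LinearMap.BilinForm ℝ V} {R : Set V} {l n : ℕ} {e : ι → V} {c : V →ₗ[ℝ] ι → ℝ}
  {L : V →ₗ[ℝ] ℝ} {N : ℝ} {α β γ : V}

theorem one_le_affineHeight (hL : IsLevelFunction B R e L)
    (hN : ∀ γ ∈ R, |coordSum c γ| + 1 ≤ N) (hγ : γ ∈ R) (hpos : 0 < L γ) :
    1 ≤ affineHeight c L N γ := by
  obtain ⟨k, hk⟩ := hL.level_eq_intCast γ hγ
  have hLγ : 1 ≤ L γ := by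
    rw [hk] at hpos ⊢
    exact_mod_cast hpos
  have hNγ := hN γ hγ
  rw [affineHeight_apply]
  nlinarith [neg_abs_le (coordSum c γ), abs_nonneg (coordSum c γ)]

theorem level_nonneg_of_affineHeight_pos (hL : IsLevelFunction B R e L) (h : IsEARS B R l n)
    (hN : ∀ γ ∈ R, |coordSum c γ| + 1 ≤ N) (hγ : γ ∈ R) (hpos : 0 < affineHeight c L N γ) :
    0 ≤ L γ := by
  by_contra! hneg
  have := hL.one_le_affineHeight hN (h.neg_mem hγ) (by simpa using hneg)
  rw [map_neg] at this
  linarith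

variable [DecidableEq ι]

theorem one_le_abs_affineHeight (hL : IsLevelFunction B R e L) (hb : IsBaseModRadical B R e c)
    (h : IsEARS B R l n) (hN : ∀ γ ∈ R, |coordSum c γ| + 1 ≤ N) (hγ : γ ∈ R) :
    1 ≤ |affineHeight c L N γ| := by
  rcases lt_trichotomy (L γ) 0 with hneg | hzero | hpos
  · rw [← abs_neg, ← map_neg]
    exact (hL.one_le_affineHeight hN (h.neg_mem hγ) (by simpa using hneg)).trans (le_abs_self _)
  · rw [affineHeight_apply, hzero, mul_zero, zero_add]
    exact hb.one_le_abs_coordSum h hγ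
  · exact (hL.one_le_affineHeight hN hγ hpos).trans (le_abs_self _)

theorem affineHeight_base (hL : IsLevelFunction B R e L) (hb : IsBaseModRadical B R e c) (i : ι) :
    affineHeight c L N (e i) = 1 := by
  simp [affineHeight_apply, coordSum_apply, hL.level_base, hb.coord_base_apply]

theorem disjoint_ker_affineHeight (hL : IsLevelFunction B R e L)
    (hb : IsBaseModRadical B R e c) (hN : N ≠ 0) :
    Disjoint (LinearMap.ker B) (LinearMap.ker (affineHeight c L N)) := by
  refine Submodule.disjoint_def.2 fun v hv hfv => Submodule.disjoint_def.1 hL.disjoint_ker v hv ?_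
  rw [← hb.ker_coord, LinearMap.mem_ker] at hv
  simpa [affineHeight_apply, coordSum_apply, hv, hN] using hfv

theorem base_mem_simpleRoots (hL : IsLevelFunction B R e L) (hb : IsBaseModRadical B R e c)
    (h : IsEARS B R l n) (hN : ∀ γ ∈ R, |coordSum c γ| + 1 ≤ N) (i : ι) :
    e i ∈ simpleRoots R (affineHeight c L N) :=
  mem_simpleRoots_of_eq_one (fun _ => hL.one_le_abs_affineHeight hb h hN) (hb.root_mem i)
    (hL.affineHeight_base hb i)

theorem eq_sum_coord_smul_of_level_eq_zero (hL : IsLevelFunction B R e L)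
    (hb : IsBaseModRadical B R e c) (hγ : L γ = 0) : γ = ∑ i, c γ i • e i := by
  refine sub_eq_zero.1 (Submodule.disjoint_def.1 hL.disjoint_ker _
    (hb.sub_sum_coord_smul_mem_ker γ) ?_)
  simp [hγ, hL.level_base]

theorem mem_closure_range_of_level_eq_zero (hL : IsLevelFunction B R e L)
    (hb : IsBaseModRadical B R e c) (hγ : γ ∈ R) (hLγ : L γ = 0)
    (hpos : 0 < affineHeight c L N γ) : γ ∈ AddSubmonoid.closure (Set.range e) := by
  obtain ⟨k, hk | hk⟩ := hb.coord_eq_natCast_or γ hγ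
  · rw [hL.eq_sum_coord_smul_of_level_eq_zero hb hLγ]
    refine sum_mem fun i _ => ?_
    rw [hk, Nat.cast_smul_eq_nsmul]
    exact AddSubmonoid.nsmul_mem _ (AddSubmonoid.subset_closure (Set.mem_range_self i)) _
  · refine absurd hpos (not_lt.2 ?_)
    rw [affineHeight_apply, hLγ, mul_zero, zero_add, coordSum_apply]
    exact Finset.sum_nonpos fun i _ => by simp [hk]

theorem mem_range_of_mem_simpleRoots (hL : IsLevelFunction B R e L)
    (hb : IsBaseModRadical B R e c) (hα : α ∈ simpleRoots R (affineHeight c L N))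
    (hLα : L α = 0) : α ∈ Set.range e := by
  obtain ⟨hαR, hpos⟩ := simpleRoots_subset hα
  refine mem_of_mem_closure_of_mem_simpleRoots (Set.range_subset_iff.2 fun i => ?_) hα
    (hL.mem_closure_range_of_level_eq_zero hb hαR hLα hpos)
  exact ⟨hb.root_mem i, by simp [hL.affineHeight_base hb]⟩

-- Simple roots are pairwise obtuse, so both roots are antidominant, hence acute to each other.
theorem eq_of_mem_simpleRoots_of_level_ne_zero (hL : IsLevelFunction B R e L)
    (hb : IsBaseModRadical B R e c) (h : IsEARS B R l n)
    (hN : ∀ γ ∈ R, |coordSum c γ| + 1 ≤ N) (hα : α ∈ simpleRoots R (affineHeight c L N))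
    (hβ : β ∈ simpleRoots R (affineHeight c L N)) (hLα : L α ≠ 0) (hLβ : L β ≠ 0) : α = β := by
  have hαR := (simpleRoots_subset hα).1
  have hN0 : N ≠ 0 := by linarith [hN α hαR, abs_nonneg (coordSum c α)]
  have obtuse : ∀ {γ η}, γ ∈ simpleRoots R (affineHeight c L N) →
      η ∈ simpleRoots R (affineHeight c L N) → γ ≠ η → B γ η ≤ 0 :=
    apply_nonpos_of_mem_simpleRoots h
      (fun γ hγ => abs_pos.1 (one_pos.trans_le (hL.one_le_abs_affineHeight hb h hN hγ)))
      (hL.disjoint_ker_affineHeight hb hN0)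
  have antidominant : ∀ {γ}, γ ∈ simpleRoots R (affineHeight c L N) → L γ ≠ 0 →
      ∀ i, B (e i) γ ≤ 0 := fun hγ hLγ i =>
    obtuse (hL.base_mem_simpleRoots hb h hN i) hγ fun hi => hLγ (hi ▸ hL.level_base i)
  by_contra hne
  exact (obtuse hα hβ hne).not_gt (hb.apply_pos_of_antidominant h hαR (simpleRoots_subset hβ).1
    (antidominant hα hLα) (antidominant hβ hLβ))

theorem exists_mem_simpleRoots_level_ne_zero (hL : IsLevelFunction B R e L)
    (hb : IsBaseModRadical B R e c) (h : IsEARS B R l n)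
    (hN : ∀ γ ∈ R, |coordSum c γ| + 1 ≤ N) (hL0 : L ≠ 0) :
    ∃ α ∈ simpleRoots R (affineHeight c L N), L α ≠ 0 := by
  by_contra! hzero
  refine hL0 (LinearMap.ext_on h.span_eq_top fun γ hγ => ?_)
  have closure_le : AddSubmonoid.closure (simpleRoots R (affineHeight c L N)) ≤
      (LinearMap.ker L).toAddSubmonoid := AddSubmonoid.closure_le.2 hzero
  rcases mem_closure_simpleRoots_or_neg h (fun _ => hL.one_le_abs_affineHeight hb h hN) hγ
    with hmem | hmem
  · exact closure_le hmem
  · simpa using closure_le hmem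

theorem exists_simpleRoots_eq_insert (hL : IsLevelFunction B R e L)
    (hb : IsBaseModRadical B R e c) (h : IsEARS B R l n)
    (hN : ∀ γ ∈ R, |coordSum c γ| + 1 ≤ N) (hL0 : L ≠ 0) :
    ∃ α, 0 < L α ∧ simpleRoots R (affineHeight c L N) = insert α (Set.range e) := by
  obtain ⟨α, hα, hLα⟩ := hL.exists_mem_simpleRoots_level_ne_zero hb h hN hL0
  obtain ⟨hαR, hpos⟩ := simpleRoots_subset hα
  refine ⟨α, (hL.level_nonneg_of_affineHeight_pos h hN hαR hpos).lt_of_ne' hLα, ?_⟩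
  refine Set.Subset.antisymm (fun β hβ => ?_)
    (Set.insert_subset hα (Set.range_subset_iff.2 (hL.base_mem_simpleRoots hb h hN)))
  by_cases hLβ : L β = 0
  · exact Or.inr (hL.mem_range_of_mem_simpleRoots hb hβ hLβ)
  · exact Or.inl (hL.eq_of_mem_simpleRoots_of_level_ne_zero hb h hN hβ hα hLβ hLα)

end IsLevelFunction

section Existence

variable {V ι : Type*} [AddCommGroup V] [Module ℝ V] {B : LinearMap.BilinForm ℝ V} {R P : Set V}
  {l m n : ℕ} {e : ι → V} {c : V →ₗ[ℝ] ι → ℝ} {L f : V →ₗ[ℝ] ℝ} {α β γ δ : V}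

theorem IsEARS.exists_basis_quotient_ker (h : IsEARS B R l n) (hPcard : P.ncard = l)
    (himage : ((LinearMap.ker B).mkQ '' P).ncard = l)
    (hind : LinearIndepOn ℝ id ((LinearMap.ker B).mkQ '' P)) :
    ∃ b : Module.Basis P ℝ (V ⧸ LinearMap.ker B), ∀ x : P, b x = (LinearMap.ker B).mkQ x := by
  have hVfin := h.findim
  have hPfin : P.Finite := Set.finite_of_ncard_pos (hPcard ▸ h.rank_pos)
  have := hPfin.fintype
  have hinj := Set.injOn_of_ncard_image_eq (himage.trans hPcard.symm)
  have hli : LinearIndependent ℝ fun x : P => (LinearMap.ker B).mkQ x :=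
    (linearIndepOn_iff_image hinj).2 hind
  have hcard : Fintype.card P = Module.finrank ℝ (V ⧸ LinearMap.ker B) := by
    have := (LinearMap.ker B).finrank_quotient_add_finrank
    rw [h.dim_null, h.dim_eq] at this
    rw [← Nat.card_eq_fintype_card, Nat.card_coe_set_eq, hPcard]
    omega
  exact ⟨Module.Basis.mk hli (hli.span_eq_top_of_card_eq_finrank' hcard).ge,
    fun x => Module.Basis.mk_apply _ _ x⟩

theorem IsEARS.exists_isBaseModRadical (h : IsEARS B R l n) [DecidableEq P]
    (hPR : P ⊆ R) (hPcard : P.ncard = l)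
    (hP : IsBaseSet ((LinearMap.ker B).mkQ '' R) ((LinearMap.ker B).mkQ '' P) l) :
    ∃ c, IsBaseModRadical B R ((↑) : P → V) c := by
  obtain ⟨-, -, himage, hind, hdecomp⟩ := hP
  have hPfin : P.Finite := Set.finite_of_ncard_pos (hPcard ▸ h.rank_pos)
  have := hPfin.fintype
  obtain ⟨b, hb⟩ := h.exists_basis_quotient_ker hPcard himage hind
  have exists_coord : ∀ v ∈ nnspan ((LinearMap.ker B).mkQ '' P),
      ∃ k : P → ℕ, ∀ i, b.equivFun v i = k i := by
    intro v hv
    rw [Set.image_eq_range] at hv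
    obtain ⟨k, rfl⟩ := AddSubmonoid.exists_of_mem_closure_range _ _ hv
    exact ⟨k, fun i => by simp [← hb, Finsupp.single_apply]⟩
  refine ⟨b.equivFun.toLinearMap ∘ₗ (LinearMap.ker B).mkQ, fun i => hPR i.2, fun i => ?_, ?_,
    fun γ hγ => ?_⟩
  · ext j
    simp only [LinearMap.comp_apply, LinearEquiv.coe_coe, ← hb, b.equivFun_self]
    simp only [Pi.single_apply, eq_comm]
  · rw [LinearEquiv.ker_comp, Submodule.ker_mkQ]
  rcases hdecomp.subset (Set.mem_image_of_mem _ hγ) with ⟨-, hmem⟩ | ⟨-, hmem⟩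
  · obtain ⟨k, hk⟩ := exists_coord _ hmem
    exact ⟨k, Or.inl hk⟩
  · obtain ⟨k, hk⟩ := exists_coord _ hmem
    refine ⟨k, Or.inr fun i => ?_⟩
    rw [← hk i, map_neg, Pi.neg_apply, neg_neg]
    rfl

theorem IsBaseModRadical.exists_eq_zsmul_add [DecidableEq ι] [Finite ι]
    (hb : IsBaseModRadical B R e c)
    (hδ : ∀ κ ∈ zspan R, κ ∈ LinearMap.ker B → κ ∈ AddSubgroup.closure {δ}) (hγ : γ ∈ R) :
    ∃ k : ℤ, ∃ μ ∈ AddSubgroup.closure (Set.range e), γ = k • δ + μ := by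
  cases nonempty_fintype ι
  obtain ⟨z, hz⟩ := hb.coord_eq_intCast hγ
  have hμ : ∀ {S : Set V}, Set.range e ⊆ S → ∑ i, z i • e i ∈ AddSubgroup.closure S := fun hS =>
    sum_mem fun i _ => zsmul_mem (AddSubgroup.subset_closure (hS ⟨i, rfl⟩)) _
  have hker := hb.sub_sum_coord_smul_mem_ker γ
  simp only [hz, Int.cast_smul_eq_zsmul] at hker
  have hspan : γ - ∑ i, z i • e i ∈ zspan R :=
    sub_mem (AddSubgroup.subset_closure hγ) (hμ (Set.range_subset_iff.2 hb.root_mem))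
  obtain ⟨k, hk⟩ := AddSubgroup.mem_closure_singleton.1 (hδ _ hspan hker)
  exact ⟨k, _, hμ subset_rfl, by rw [hk, sub_add_cancel]⟩

theorem level_zsmul_add (hL : ∀ i, L (e i) = 0) (hδ : L δ = 1) (k : ℤ) {μ : V}
    (hμ : μ ∈ AddSubgroup.closure (Set.range e)) : L (k • δ + μ) = k := by
  have hle : AddSubgroup.closure (Set.range e) ≤ (LinearMap.ker L).toAddSubgroup :=
    (AddSubgroup.closure_le _).2 (Set.range_subset_iff.2 hL)
  have hLμ : L μ = 0 := hle hμ
  simp [hδ, hLμ]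

theorem IsBaseModRadical.exists_isLevelFunction [DecidableEq ι] [Finite ι]
    (hb : IsBaseModRadical B R e c) (h : IsEARS B R l 1) (hδ0 : δ ≠ 0) (hδker : δ ∈ LinearMap.ker B)
    (hδ : ∀ κ ∈ zspan R, κ ∈ LinearMap.ker B → κ ∈ AddSubgroup.closure {δ}) :
    ∃ L, IsLevelFunction B R e L ∧ L δ = 1 := by
  have hδspan : δ ∉ Submodule.span ℝ (Set.range e) := fun hmem => by
    have hdisj := Submodule.range_ker_disjoint hb.linearIndependent_coord_base
    exact hδ0 (Submodule.disjoint_def.1 hdisj δ hmem (hb.ker_coord ▸ hδker))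
  obtain ⟨L, hLspan, hLδ⟩ := LinearMap.exists_extend_of_notMem (0 : _ →ₗ[ℝ] ℝ) hδspan 1
  have hLe : ∀ i, L (e i) = 0 := fun i =>
    LinearMap.congr_fun hLspan ⟨e i, Submodule.subset_span ⟨i, rfl⟩⟩
  refine ⟨L, ⟨hLe, fun γ hγ => ?_, Submodule.disjoint_def.2 fun v hv hLv => ?_⟩, hLδ⟩
  · obtain ⟨k, μ, hμ, rfl⟩ := hb.exists_eq_zsmul_add hδ hγ
    exact ⟨k, level_zsmul_add hLe hLδ k hμ⟩
  · obtain ⟨a, ha⟩ := (finrank_eq_one_iff_of_nonzero' (⟨δ, hδker⟩ : LinearMap.ker B)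
      (by simpa using hδ0)).1 h.dim_null ⟨v, hv⟩
    obtain rfl : a • δ = v := congrArg Subtype.val ha
    have ha0 : a = 0 := by simpa [hLδ] using hLv
    rw [ha0, zero_smul]

theorem IsLevelFunction.exists_eq_natCast_zsmul_add [DecidableEq ι] [Finite ι]
    (hL : IsLevelFunction B R e L) (hb : IsBaseModRadical B R e c) (hLδ : L δ = 1)
    (hδ : ∀ κ ∈ zspan R, κ ∈ LinearMap.ker B → κ ∈ AddSubgroup.closure {δ}) (hγ : γ ∈ R)
    (hpos : 0 < L γ) :
    ∃ m : ℕ, 0 < m ∧ ∃ μ ∈ AddSubgroup.closure (Set.range e), γ = (m : ℤ) • δ + μ := by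
  obtain ⟨k, μ, hμ, rfl⟩ := hb.exists_eq_zsmul_add hδ hγ
  rw [level_zsmul_add hL.level_base hLδ k hμ, Int.cast_pos] at hpos
  lift k to ℕ using hpos.le
  exact ⟨k, by exact_mod_cast hpos, μ, hμ, rfl⟩

theorem isBaseSet_insert_of_simpleRoots_eq (h : IsEARS B R l n) (hf : ∀ γ ∈ R, 1 ≤ |f γ|)
    (hsimple : simpleRoots R f = insert α P) (hPfin : P.Finite) (hPli : LinearIndepOn ℝ id P)
    (hα : α ∉ Submodule.span ℝ P) : IsBaseSet R (insert α P) (P.ncard + 1) := by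
  refine ⟨fun γ hγ => (simpleRoots_subset (hsimple.ge hγ)).1, hPfin.insert α,
    Set.ncard_insert_of_notMem (fun hmem => hα (Submodule.subset_span hmem)) hPfin,
    hPli.id_insert hα, ?_⟩
  rw [← Set.inter_union_distrib_left, eq_comm, Set.inter_eq_left, ← hsimple]
  exact fun γ => mem_closure_simpleRoots_or_neg h hf

theorem simpleRoots_subset_of_isBaseSet (hP : IsBaseSet R P m)
    (hpos : ∀ γ ∈ P, 0 < f γ) : simpleRoots R f ⊆ P := by
  intro α hα
  obtain ⟨hPR, -, -, -, hdecomp⟩ := hP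
  obtain ⟨hαR, hfα⟩ := simpleRoots_subset hα
  refine mem_of_mem_closure_of_mem_simpleRoots (fun γ hγ => ⟨hPR hγ, hpos γ hγ⟩) hα ?_
  refine (hdecomp.subset hαR).elim And.right fun hneg => absurd hfα (not_lt.2 ?_)
  have hle : AddSubmonoid.closure P ≤ (AddSubmonoid.nonneg ℝ).comap f.toAddMonoidHom :=
    AddSubmonoid.closure_le.2 fun γ hγ => (hpos γ hγ).le
  simpa using hle hneg.2

theorem eq_of_isBaseSet_insert (hsimple : simpleRoots R f = insert α P) (hαP : α ∉ P)
    (hβ : IsBaseSet R (insert β P) m) (hfβ : 0 < f β) : β = α := by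
  have hpos : ∀ γ ∈ insert β P, 0 < f γ := Set.forall_mem_insert.2
    ⟨hfβ, fun γ hγ => (simpleRoots_subset (hsimple.ge (Set.mem_insert_of_mem α hγ))).2⟩
  have hα := simpleRoots_subset_of_isBaseSet hβ hpos (hsimple.ge (Set.mem_insert α P))
  exact (hα.resolve_right hαP).symm

end Existence

/-- Existence and uniqueness of `α₀` completing `Π′` to a base of an
affine root system `R`, with `α₀ ∈ ℕδ′ + ℤΠ′`. -/
theorem stmt2 {V : Type*} [AddCommGroup V] [Module ℝ V]
    (B : LinearMap.BilinForm ℝ V) (R : Set V) (l : ℕ)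
    (hE : IsEARS B R l 1)
    (δ' : V) (hδ0 : δ' ≠ 0) (hδiso : B δ' δ' = 0)
    (hδgen : (AddSubgroup.closure {δ'} : Set V) = (zspan R : Set V) ∩ nullSet B)
    (P' : Set V) (hP'R : P' ⊆ R) (hP'card : P'.ncard = l)
    -- `π(Π′)` is a base of the irreducible finite root system `π(R)`
    (hP'base : IsBaseSet ((LinearMap.ker B).mkQ '' R) ((LinearMap.ker B).mkQ '' P') l) :
    ∃! α₀ : V, α₀ ∈ R ∧ IsBaseSet R (insert α₀ P') (l + 1) ∧
      ∃ m : ℕ, 0 < m ∧ ∃ μ ∈ AddSubgroup.closure P', α₀ = (m : ℤ) • δ' + μ := by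
  classical
  have hfin : P'.Finite := Set.finite_of_ncard_pos (hP'card ▸ hE.rank_pos)
  have := hfin.fintype
  have hδ : ∀ κ ∈ zspan R, κ ∈ LinearMap.ker B → κ ∈ AddSubgroup.closure {δ'} :=
    fun κ hκ hker => hδgen.ge ⟨hκ, hE.mem_ker_iff_apply_self_eq_zero.1 hker⟩
  obtain ⟨c, hb⟩ := hE.exists_isBaseModRadical hP'R hP'card hP'base
  obtain ⟨L, hL, hLδ⟩ := hb.exists_isLevelFunction hE hδ0
    (hE.mem_ker_iff_apply_self_eq_zero.2 hδiso) hδ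
  obtain ⟨N, hN⟩ := hb.exists_forall_abs_coordSum_add_one_le hE
  obtain ⟨α, hLα, hsimple⟩ := hL.exists_simpleRoots_eq_insert hb hE hN
    (fun hL0 => by simp [hL0] at hLδ)
  rw [Subtype.range_coe] at hsimple
  have hαR : α ∈ R := (simpleRoots_subset (hsimple.ge (Set.mem_insert α P'))).1
  have hαspan : α ∉ Submodule.span ℝ P' := fun hmem =>
    hLα.ne' (Submodule.span_le.2 (fun γ hγ => hL.level_base ⟨γ, hγ⟩) hmem : α ∈ LinearMap.ker L)
  refine ⟨α, ⟨hαR, ?_, ?_⟩, ?_⟩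
  · exact hP'card ▸ isBaseSet_insert_of_simpleRoots_eq hE
      (fun _ => hL.one_le_abs_affineHeight hb hE hN) hsimple hfin hb.linearIndependent hαspan
  · simpa only [Subtype.range_coe] using hL.exists_eq_natCast_zsmul_add hb hLδ hδ hαR hLα
  · rintro β ⟨hβR, hβ, m, hm, μ, hμ, hβμ⟩
    have hLβ : 0 < L β := by
      rw [hβμ, level_zsmul_add hL.level_base hLδ m (by rwa [Subtype.range_coe])]
      exact_mod_cast hm
    exact eq_of_isBaseSet_insert hsimple (fun hmem => hαspan (Submodule.subset_span hmem)) hβ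
      (one_pos.trans_le (hL.one_le_affineHeight hN hβR hLβ))
end

section
/- Let R be a reduced elliptic root system of rank l with fundamental-set Π ∪ {a}, and let S be a nonempty proper connected subset of Π. Set V^S := ℝS ⊕ ℝa and R^S := R ∩ V^S. Then (R^S, V^S) is a reduced affine root system, π_a(R^S) is an irreducible finite root system in V/ℝa with base π_a(S), and ℤR^S = ℤS ⊕ ℤk_S a for some positive integer k_S. -/
/-- A fundamental-set `Π ∪ {a}` of a reduced elliptic root system `R` of rank `l`:
(FS1) `a ∈ (ℤR)⁰` and `(ℤR)⁰ = ℤa ⊕ ℤb` for some `b`;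
(FS2) `|Π| = l+1`, `Π ⊆ R` and `π_a(Π)` is a base of the affine root system `π_a(R)`. -/
def IsFundamentalSet {V : Type*} [AddCommGroup V] [Module ℝ V]
    (B : LinearMap.BilinForm ℝ V) (R : Set V) (l : ℕ) (P : Set V) (a : V) : Prop :=
  a ∈ zspan R ∧ B a a = 0 ∧
  (∃ b : V, b ∈ zspan R ∧ B b b = 0 ∧
    ((zspan R : Set V) ∩ nullSet B = {v | ∃ m n : ℤ, v = m • a + n • b}) ∧
    (∀ m n : ℤ, m • a + n • b = 0 → m = 0 ∧ n = 0)) ∧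
  P ⊆ R ∧ P.Finite ∧ P.ncard = l + 1 ∧
  IsBaseSet ((Submodule.span ℝ {a}).mkQ '' R) ((Submodule.span ℝ {a}).mkQ '' P) (l + 1)

/-- Quotient form from a symmetric form vanishing on `W`. -/
def quotFormBy {V : Type*} [AddCommGroup V] [Module ℝ V]
    (B : LinearMap.BilinForm ℝ V) (W : Submodule ℝ V)
    (h : ∀ w ∈ W, B w = 0) (hsymm : ∀ u v, B u v = B v u) :
    LinearMap.BilinForm ℝ (V ⧸ W) :=
  quotForm W B h (fun v w hw => by rw [hsymm v w, h w hw]; simp)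

/- Modulo `ℝa` the root system `R` becomes an affine one with base `π_a(Π)`. For an affine base the
form is positive definite on the span of any proper subset, so an isotropic vector of `V^S` is a
multiple of `a`; this makes `R^S` affine and `π_a(R^S)` finite. Were `π_a` injective on `R`, every
root would lie in the span of lifts of the simple roots of `π_a(R)` and `π_a` would be injective on
`V`. So two roots share their image, and by connectedness every root then shares its image with
another one. For a root in `S` the difference of the two is a nonzero multiple of `a` in `ℤR^S`.
Since `ℤR^S` and `ℤS` have the same image under `π_a`, the modular law gives
`ℤR^S = ℤS ⊕ (ℤR^S ∩ ℝa)`, and the second summand is a nonzero subgroup of `ℤa`. -/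

section Forms

variable {E E' : Type*} [AddCommGroup E] [Module ℝ E] [AddCommGroup E'] [Module ℝ E']
  {B : LinearMap.BilinForm ℝ E} {B' : LinearMap.BilinForm ℝ E'}

theorem srefl_apply (B : LinearMap.BilinForm ℝ E) (v z : E) :
    srefl B v z = z - (2 * (B v v)⁻¹ * B v z) • v := by
  simp [srefl]

theorem srefl_self {v : E} (hv : B v v ≠ 0) : srefl B v v = -v := by
  rw [srefl_apply, mul_assoc, inv_mul_cancel₀ hv, mul_one, two_smul]
  abel

theorem srefl_srefl {v : E} (hv : B v v ≠ 0) (z : E) : srefl B v (srefl B v z) = z := by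
  simp only [srefl_apply, map_sub, map_smul]
  match_scalars <;> field_simp
  ring

theorem apply_srefl {v : E} (hv : B v v ≠ 0) (z : E) : B v (srefl B v z) = -B v z := by
  simp only [srefl_apply, map_sub, map_smul, smul_eq_mul]
  field_simp
  ring

theorem srefl_mem_iff {U : Submodule ℝ E} {v z : E} (hv : v ∈ U) : srefl B v z ∈ U ↔ z ∈ U := by
  rw [srefl_apply, U.sub_mem_iff_left (U.smul_mem _ hv)]

theorem map_srefl {f : E →ₗ[ℝ] E'} (hf : ∀ x y, B' (f x) (f y) = B x y) (v z : E) :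
    f (srefl B v z) = srefl B' (f v) (f z) := by
  simp only [srefl_apply, map_sub, map_smul, hf]

/-- Connectedness of a set of vectors (axiom (AX5)): it has no nonempty proper subset orthogonal to
its complement. -/
def FormConnected (B : LinearMap.BilinForm ℝ E) (S : Set E) : Prop :=
  ∀ S' ⊆ S, S'.Nonempty → S' ≠ S → ∃ x ∈ S', ∃ y ∈ S \ S', B x y ≠ 0

namespace FormConnected

theorem image {S : Set E} (hS : FormConnected B S) {f : E → E'}
    (hf : ∀ x y, B' (f x) (f y) = B x y) : FormConnected B' (f '' S) := by
  rintro S' hS'S ⟨_, hy⟩ hne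
  obtain ⟨x, hx, rfl⟩ := hS'S hy
  obtain ⟨x, hx, y, hy, hxy⟩ := hS (S ∩ f ⁻¹' S') Set.inter_subset_left ⟨x, hx, hy⟩ fun h ↦
    hne (hS'S.antisymm (Set.image_subset_iff.mpr (Set.inter_eq_left.mp h)))
  exact ⟨f x, hx.2, f y, ⟨Set.mem_image_of_mem f hy.1, fun h ↦ hy.2 ⟨hy.1, h⟩⟩, by rwa [hf]⟩

theorem of_image {S : Set E} {f : E → E'} (hinj : Function.Injective f)
    (hf : ∀ x y, B' (f x) (f y) = B x y) (hS : FormConnected B' (f '' S)) :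
    FormConnected B S := by
  intro S' hS'S hS' hne
  obtain ⟨_, ⟨x, hx, rfl⟩, _, ⟨⟨y, hy, rfl⟩, hyS'⟩, hxy⟩ := hS (f '' S') (Set.image_mono hS'S)
    (hS'.image f) (hinj.image_injective.ne hne)
  exact ⟨x, hx, y, ⟨hy, fun h ↦ hyS' (Set.mem_image_of_mem f h)⟩, by rwa [← hf]⟩

theorem of_subset (hB : B.IsSymm) {S T : Set E} (hS : FormConnected B S)
    (hST : S ⊆ T) (hT : ∀ y ∈ T, ∃ s ∈ S, B s y ≠ 0) : FormConnected B T := by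
  intro T' hT'T hT'ne hne
  obtain ⟨x, hxT, hxT'⟩ := Set.exists_of_ssubset (hT'T.ssubset_of_ne hne)
  obtain ⟨y, hy⟩ := hT'ne
  rcases (S ∩ T').eq_empty_or_nonempty with hempty | hmeet
  · obtain ⟨s, hs, hsy⟩ := hT y (hT'T hy)
    exact ⟨y, hy, s, ⟨hST hs, fun h ↦ hempty.subset ⟨hs, h⟩⟩, by rwa [hB.eq]⟩
  · by_cases hsub : S ∩ T' = S
    · obtain ⟨s, hs, hsx⟩ := hT x hxT
      exact ⟨s, Set.inter_eq_left.mp hsub hs, x, ⟨hxT, hxT'⟩, hsx⟩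
    · obtain ⟨s, hs, t, ht, hst⟩ := hS (S ∩ T') Set.inter_subset_left hmeet hsub
      exact ⟨s, hs.2, t, ⟨hST ht.1, fun h ↦ ht.2 ⟨ht.1, h⟩⟩, hst⟩

end FormConnected

/-- The axioms of an extended affine root system that involve neither the ambient dimension nor
the lattice `ℤR`: the form is positive semidefinite, the roots are non-isotropic, and (AX3) and
(AX4) hold, the latter in the form `s_α(R) ⊆ R`. -/
structure IsRootSet (B : LinearMap.BilinForm ℝ E) (R : Set E) : Prop where
  isPosSemidef : B.IsPosSemidef
  nonisotropic : ∀ α ∈ R, B α α ≠ 0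
  integral : ∀ α ∈ R, ∀ β ∈ R, ∃ m : ℤ, 2 * B α β = m * B α α
  srefl_mem : ∀ α ∈ R, ∀ β ∈ R, srefl B α β ∈ R

namespace IsRootSet

variable {R : Set E}

theorem isSymm (hR : IsRootSet B R) : B.IsSymm := hR.isPosSemidef.isSymm

theorem pos (hR : IsRootSet B R) {α : E} (hα : α ∈ R) : 0 < B α α :=
  (hR.isPosSemidef.nonneg α).lt_of_ne' (hR.nonisotropic α hα)

theorem neg_mem (hR : IsRootSet B R) {α : E} (hα : α ∈ R) : -α ∈ R :=
  srefl_self (hR.nonisotropic α hα) ▸ hR.srefl_mem α hα α hα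

theorem srefl_image (hR : IsRootSet B R) {α : E} (hα : α ∈ R) : srefl B α '' R = R := by
  refine (Set.image_subset_iff.mpr fun β hβ ↦ hR.srefl_mem α hα β hβ).antisymm fun β hβ ↦ ?_
  exact ⟨_, hR.srefl_mem α hα β hβ, srefl_srefl (hR.nonisotropic α hα) β⟩

theorem exists_srefl_eq_sub (hR : IsRootSet B R) {α β : E} (hα : α ∈ R) (hβ : β ∈ R) :
    ∃ m : ℤ, 2 * B α β = m * B α α ∧ srefl B α β = β - (m : ℝ) • α := by
  obtain ⟨m, hm⟩ := hR.integral α hα β hβ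
  refine ⟨m, hm, ?_⟩
  rw [srefl_apply, mul_right_comm, hm, mul_inv_cancel_right₀ (hR.nonisotropic α hα)]

theorem preimage {R' : Set E'} (hR' : IsRootSet B' R') {f : E →ₗ[ℝ] E'}
    (hf : ∀ x y, B' (f x) (f y) = B x y) : IsRootSet B (f ⁻¹' R') where
  isPosSemidef :=
    { eq x y := by rw [← hf, ← hf, hR'.isSymm.eq]
      nonneg x := hf x x ▸ hR'.isPosSemidef.nonneg (f x) }
  nonisotropic α hα := hf α α ▸ hR'.nonisotropic (f α) hα
  integral α hα β hβ := by simpa only [hf] using hR'.integral (f α) hα (f β) hβ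
  srefl_mem α hα β hβ := by
    rw [Set.mem_preimage, map_srefl hf]
    exact hR'.srefl_mem (f α) hα (f β) hβ

theorem image (hR : IsRootSet B R) {f : E →ₗ[ℝ] E'} (hsurj : Function.Surjective f)
    (hf : ∀ x y, B' (f x) (f y) = B x y) : IsRootSet B' (f '' R) where
  isPosSemidef :=
    { eq := hsurj.forall₂.mpr fun x y ↦ by rw [hf, hf, hR.isSymm.eq]
      nonneg := hsurj.forall.mpr fun x ↦ hf x x ▸ hR.isPosSemidef.nonneg x }
  nonisotropic := Set.forall_mem_image.mpr fun α hα ↦ hf α α ▸ hR.nonisotropic α hα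
  integral := by
    rintro _ ⟨α, hα, rfl⟩ _ ⟨β, hβ, rfl⟩
    simpa only [hf] using hR.integral α hα β hβ
  srefl_mem := by
    rintro _ ⟨α, hα, rfl⟩ _ ⟨β, hβ, rfl⟩
    exact ⟨_, hR.srefl_mem α hα β hβ, map_srefl hf α β⟩

theorem inter_submodule (hR : IsRootSet B R) (U : Submodule ℝ E) : IsRootSet B (R ∩ U) where
  isPosSemidef := hR.isPosSemidef
  nonisotropic α hα := hR.nonisotropic α hα.1
  integral α hα β hβ := hR.integral α hα.1 β hβ.1
  srefl_mem α hα β hβ := ⟨hR.srefl_mem α hα.1 β hβ.1, (srefl_mem_iff hα.2).mpr hβ.2⟩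

end IsRootSet

theorem IsEARS.isRootSet {R : Set E} {l n : ℕ} (hR : IsEARS B R l n) : IsRootSet B R where
  isPosSemidef := { eq := hR.symm, nonneg := hR.posSemidef }
  nonisotropic := hR.root_nonisotropic
  integral := hR.integral
  srefl_mem α hα _ hβ := (hR.reflect α hα).subset (Set.mem_image_of_mem _ hβ)

end Forms

/-- A basis of the ambient space consisting of roots and with respect to which every root is a
nonnegative or a nonpositive combination. -/
structure IsRootBasis {ι E : Type*} [AddCommGroup E] [Module ℝ E] (B : LinearMap.BilinForm ℝ E)
    (R : Set E) (b : Module.Basis ι ℝ E) : Prop extends IsRootSet B R where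
  basis_mem : ∀ i, b i ∈ R
  nonneg_or_nonpos : ∀ β ∈ R, (∀ i, 0 ≤ b.repr β i) ∨ ∀ i, b.repr β i ≤ 0

namespace IsRootBasis

variable {ι E E' : Type*} [AddCommGroup E] [Module ℝ E] [AddCommGroup E'] [Module ℝ E']
  {B : LinearMap.BilinForm ℝ E} {B' : LinearMap.BilinForm ℝ E'} {R : Set E}
  {b : Module.Basis ι ℝ E}

theorem apply_basis_nonpos (hb : IsRootBasis B R b) {i j : ι} (hij : i ≠ j) :
    B (b i) (b j) ≤ 0 := by
  by_contra! hpos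
  obtain ⟨m, hm, hs⟩ := hb.exists_srefl_eq_sub (hb.basis_mem i) (hb.basis_mem j)
  have hm0 : (0 : ℝ) < m :=
    pos_of_mul_pos_left (hm ▸ mul_pos two_pos hpos) (hb.pos (hb.basis_mem i)).le
  rcases hb.nonneg_or_nonpos _ (hs ▸ hb.srefl_mem _ (hb.basis_mem i) _ (hb.basis_mem j)) with h | h
  · exact hm0.not_ge (by simpa [hij.symm] using h i)
  · exact zero_lt_one.not_ge (by simpa [hij] using h j)

theorem exists_apply_basis_pos [Finite ι] (hb : IsRootBasis B R b) {β : E} (hβ : β ∈ R)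
    (hpos : ∀ i, 0 ≤ b.repr β i) : ∃ i, 0 < B (b i) β := by
  cases nonempty_fintype ι
  by_contra! hle
  refine (hb.pos hβ).not_ge ?_
  calc B β β = B (∑ i, b.repr β i • b i) β := by rw [b.sum_repr]
    _ = ∑ i, b.repr β i * B (b i) β := by
        simp only [map_sum, map_smul, LinearMap.sum_apply, LinearMap.smul_apply, smul_eq_mul]
    _ ≤ 0 := Finset.sum_nonpos fun i _ ↦ mul_nonpos_of_nonneg_of_nonpos (hpos i) (hle i)

theorem eq_smul_or_sum_repr_srefl_le [Fintype ι] (hb : IsRootBasis B R b) {β : E}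
    (hβ : β ∈ R) (hpos : ∀ i, 0 ≤ b.repr β i) {i : ι} (hi : 0 < B (b i) β) :
    β = b.repr β i • b i ∨ (∀ j, 0 ≤ b.repr (srefl B (b i) β) j) ∧
      ∑ j, b.repr (srefl B (b i) β) j ≤ ∑ j, b.repr β j - 1 := by
  obtain ⟨m, hm, hs⟩ := hb.exists_srefl_eq_sub (hb.basis_mem i) hβ
  have hm1 : (1 : ℝ) ≤ m := by
    have : (0 : ℝ) < m :=
      pos_of_mul_pos_left (hm ▸ mul_pos two_pos hi) (hb.pos (hb.basis_mem i)).le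
    exact_mod_cast this
  rcases hb.nonneg_or_nonpos _ (hb.srefl_mem _ (hb.basis_mem i) _ hβ) with h | h
  · refine .inr ⟨h, ?_⟩
    have : ∑ j, b.repr (srefl B (b i) β) j = ∑ j, b.repr β j - m := by
      classical
      simp [hs, Finsupp.single_apply]
    linarith
  · left
    refine b.ext_elem fun j ↦ ?_
    rcases eq_or_ne j i with rfl | hji
    · simp
    · have hle : b.repr β j ≤ 0 := by simpa [hs, hji.symm] using h j
      simpa [hji.symm] using hle.antisymm (hpos j)

/- A positive root that is not a multiple of a basis vector stays positive under some simple
reflection which lowers its height by at least one. -/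
theorem induction_of_nonneg [Finite ι] (hb : IsRootBasis B R b) {p : E → Prop}
    (multiple : ∀ i (c : ℝ), c • b i ∈ R → p (c • b i))
    (reflect : ∀ i, ∀ β ∈ R, B (b i) β ≠ 0 → p (srefl B (b i) β) → p β)
    {β : E} (hβ : β ∈ R) (hpos : ∀ i, 0 ≤ b.repr β i) : p β := by
  cases nonempty_fintype ι
  obtain ⟨n, hn⟩ := exists_nat_gt (∑ i, b.repr β i)
  induction n generalizing β with
  | zero => exact absurd hn (by simpa using Finset.sum_nonneg fun i _ ↦ hpos i)
  | succ n ih =>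
    obtain ⟨i, hi⟩ := hb.exists_apply_basis_pos hβ hpos
    rcases hb.eq_smul_or_sum_repr_srefl_le hβ hpos hi with heq | ⟨hpos', hle⟩
    · exact heq ▸ multiple i _ (heq ▸ hβ)
    · refine reflect i β hβ hi.ne' (ih (hb.srefl_mem _ (hb.basis_mem i) β hβ) hpos' ?_)
      push_cast at hn
      linarith

theorem induction [Finite ι] (hb : IsRootBasis B R b) {p : E → Prop}
    (multiple : ∀ i (c : ℝ), c • b i ∈ R → p (c • b i))
    (reflect : ∀ i, ∀ β ∈ R, B (b i) β ≠ 0 → p (srefl B (b i) β) → p β)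
    {β : E} (hβ : β ∈ R) : p β := by
  rcases hb.nonneg_or_nonpos β hβ with hpos | hneg
  · exact hb.induction_of_nonneg multiple reflect hβ hpos
  · rw [← neg_neg β]
    refine hb.induction_of_nonneg (p := fun γ ↦ p (-γ)) (fun i c hc ↦ ?_) (fun i γ hγ hne h ↦ ?_)
      (hb.neg_mem hβ) (by simpa using hneg)
    · rw [← neg_smul]
      exact multiple i (-c) (neg_smul c (b i) ▸ hb.neg_mem hc)
    · exact reflect i (-γ) (hb.neg_mem hγ) (by simpa using hne) (by rwa [map_neg])

theorem formConnected_range [Finite ι] (hb : IsRootBasis B R b) (hR : FormConnected B R) :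
    FormConnected B (Set.range b) := by
  intro S' hS' ⟨s, hs⟩ hne
  by_contra! horth
  obtain ⟨t, ht, htS'⟩ := Set.exists_of_ssubset (hS'.ssubset_of_ne hne)
  set M := Submodule.span ℝ S'
  set N := Submodule.span ℝ (Set.range b \ S')
  have hMN : ∀ x ∈ M, ∀ y ∈ N, B x y = 0 := fun x hx y hy ↦
    LinearMap.BilinMap.apply_apply_mem_of_mem_span ⊥ S' _ B horth x y hx hy
  have hroots : ∀ β ∈ R, β ∈ M ∨ β ∈ N := fun β hβ ↦ by
    refine hb.induction (p := fun β ↦ β ∈ M ∨ β ∈ N) (fun i c _ ↦ ?_) (fun i β _ hne h ↦ ?_) hβ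
    · by_cases hi : b i ∈ S'
      · exact .inl (M.smul_mem c (Submodule.subset_span hi))
      · exact .inr (N.smul_mem c (Submodule.subset_span ⟨⟨i, rfl⟩, hi⟩))
    · have hne' : B (b i) (srefl B (b i) β) ≠ 0 := by
        rwa [apply_srefl (hb.nonisotropic _ (hb.basis_mem i)), neg_ne_zero]
      by_cases hi : b i ∈ S'
      · have hiM : b i ∈ M := Submodule.subset_span hi
        exact .inl ((srefl_mem_iff hiM).mp (h.resolve_right fun h ↦ hne' (hMN _ hiM _ h)))
      · have hiN : b i ∈ N := Submodule.subset_span ⟨⟨i, rfl⟩, hi⟩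
        exact .inr ((srefl_mem_iff hiN).mp
          (h.resolve_left fun h ↦ hne' (hb.isSymm.eq _ _ ▸ hMN _ h _ hiN)))
  obtain ⟨i, rfl⟩ := ht
  have htM : b i ∉ M := fun h ↦
    hb.nonisotropic _ (hb.basis_mem i) (hMN _ h _ (Submodule.subset_span ⟨⟨i, rfl⟩, htS'⟩))
  obtain ⟨j, rfl⟩ := hS' hs
  obtain ⟨x, hx, y, hy, hxy⟩ := hR (R ∩ M) Set.inter_subset_left
    ⟨b j, hb.basis_mem j, Submodule.subset_span hs⟩
    fun h ↦ htM (h.ge (hb.basis_mem i)).2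
  exact hxy (hMN x hx.2 y ((hroots y hy.1).resolve_left fun h ↦ hy.2 ⟨hy.1, h⟩))

theorem injective_of_injOn [Finite ι] {b : Module.Basis ι ℝ E'} {f : E →ₗ[ℝ] E'}
    (hb : IsRootBasis B' (f '' R) b) (hR : IsRootSet B R) (hf : ∀ x y, B' (f x) (f y) = B x y)
    (hspan : Submodule.span ℝ R = ⊤) (hinj : Set.InjOn f R) : Function.Injective f := by
  choose p hpR hp using hb.basis_mem
  set M := Submodule.span ℝ (Set.range p)
  have hpM : ∀ i, p i ∈ M := fun i ↦ Submodule.subset_span ⟨i, rfl⟩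
  have hlift : ∀ β ∈ f '' R, ∀ γ ∈ R, f γ = β → γ ∈ M := fun β hβ ↦ by
    refine hb.induction (p := fun β ↦ ∀ γ ∈ R, f γ = β → γ ∈ M) (fun i c _ γ hγ hγi ↦ ?_)
      (fun i β _ _ ih γ hγ hγβ ↦ ?_) hβ
    · have hneg : srefl B (p i) γ = -γ := by
        refine hinj (hR.srefl_mem _ (hpR i) γ hγ) (hR.neg_mem hγ) ?_
        rw [map_srefl hf, map_neg, hγi, hp, map_smul, srefl_self, smul_neg]
        exact hb.nonisotropic _ (hb.basis_mem i)
      rw [srefl_apply, sub_eq_iff_eq_add, ← sub_eq_iff_eq_add', sub_neg_eq_add,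
        ← two_smul ℝ] at hneg
      exact (M.smul_mem_iff two_ne_zero).mp (hneg ▸ M.smul_mem _ (hpM i))
    · exact (srefl_mem_iff (hpM i)).mp
        (ih _ (hR.srefl_mem _ (hpR i) γ hγ) (by rw [map_srefl hf, hp, hγβ]))
  have hM : M = ⊤ :=
    top_le_iff.mp (hspan ▸ Submodule.span_le.mpr fun γ hγ ↦ hlift _ ⟨γ, hγ, rfl⟩ γ hγ rfl)
  have hli : LinearIndependent ℝ (f ∘ p) := by
    rw [show f ∘ p = b from funext hp]
    exact b.linearIndependent
  rw [← LinearMap.ker_eq_bot, ← top_disjoint, ← hM]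
  exact Submodule.range_ker_disjoint hli

end IsRootBasis

section Twins

variable {E E' : Type*} [AddCommGroup E] [Module ℝ E] [AddCommGroup E'] [Module ℝ E']
  {B : LinearMap.BilinForm ℝ E} {B' : LinearMap.BilinForm ℝ E'} {R : Set E}

/- If `x ≠ x'` have the same image and `B x y ≠ 0`, then `y` and `s_x (s_x' y)` differ by a nonzero
multiple of `x - x'`. -/
theorem IsRootSet.exists_ne_map_eq (hR : IsRootSet B R) (hconn : FormConnected B R)
    {f : E →ₗ[ℝ] E'} (hf : ∀ x y, B' (f x) (f y) = B x y) (hinj : ¬Set.InjOn f R)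
    {α : E} (hα : α ∈ R) : ∃ β ∈ R, β ≠ α ∧ f β = f α := by
  set T := {α ∈ R | ∃ β ∈ R, β ≠ α ∧ f β = f α}
  have hT : T.Nonempty := by
    simp only [Set.InjOn, not_forall] at hinj
    obtain ⟨x, hx, x', hx', hxx', hne⟩ := hinj
    exact ⟨x', hx', x, hx, hne, hxx'⟩
  suffices T = R from (this.ge hα).2
  by_contra hne
  obtain ⟨x, ⟨hx, x', hx', hxx', hfx⟩, y, ⟨hy, hyT⟩, hxy⟩ := hconn T (Set.sep_subset _ _) hT hne
  have hs : ∀ z ∈ R, f z = f x → srefl B z y = y - (2 * (B x x)⁻¹ * B x y) • z := fun z _ hz ↦ by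
    rw [srefl_apply, ← hf z z, ← hf z y, hz, hf, hf]
  have hmem : srefl B x (srefl B x' y) ∈ R := hR.srefl_mem x hx _ (hR.srefl_mem x' hx' y hy)
  refine hyT ⟨hy, _, hmem, fun heq ↦ hxx' ?_, ?_⟩
  · have := congrArg (srefl B x) heq
    rw [srefl_srefl (hR.nonisotropic x hx), hs x hx rfl, hs x' hx' hfx, sub_right_inj] at this
    exact smul_right_injective E
      (mul_ne_zero (mul_ne_zero two_ne_zero (inv_ne_zero (hR.nonisotropic x hx))) hxy) this
  · rw [map_srefl hf, map_srefl hf, hfx, srefl_srefl]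
    rw [hf]
    exact hR.nonisotropic x hx

end Twins

section PositiveDefinite

variable {ι E : Type*} [AddCommGroup E] [Module ℝ E] {B : LinearMap.BilinForm ℝ E}

theorem apply_eq_zero_of_apply_self_eq_zero (hB : B.IsPosSemidef) {v : E} (hv : B v v = 0) (x : E) :
    B x v = 0 := by
  have hker := (LinearMap.BilinForm.apply_apply_same_eq_zero_iff B hB.nonneg
    (LinearMap.BilinForm.isPosSemidef_iff.mp hB).isSymm).mp hv
  rw [hB.eq, LinearMap.mem_ker.mp hker, LinearMap.zero_apply]

variable [Fintype ι]

theorem apply_sum_smul_self (c : ι → ℝ) (x : ι → E) :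
    B (∑ i, c i • x i) (∑ i, c i • x i) = ∑ i, ∑ j, c i * c j * B (x i) (x j) := by
  simp only [map_sum, map_smul, LinearMap.sum_apply, LinearMap.smul_apply, smul_eq_mul,
    Finset.mul_sum, mul_assoc]
  exact Finset.sum_comm.trans (by simp only [mul_left_comm])

theorem apply_sum_abs_smul_eq_zero (hB : B.IsPosSemidef) {x : ι → E}
    (hoff : ∀ i j, i ≠ j → B (x i) (x j) ≤ 0) {c : ι → ℝ}
    (hc : B (∑ i, c i • x i) (∑ i, c i • x i) = 0) (y : E) : B y (∑ i, |c i| • x i) = 0 := by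
  refine apply_eq_zero_of_apply_self_eq_zero hB (le_antisymm ?_ (hB.nonneg _)) y
  rw [← hc, apply_sum_smul_self, apply_sum_smul_self]
  refine Finset.sum_le_sum fun i _ ↦ Finset.sum_le_sum fun j _ ↦ ?_
  rcases eq_or_ne i j with rfl | hij
  · rw [abs_mul_abs_self]
  · rw [← abs_mul]
    exact mul_le_mul_of_nonpos_right (le_abs_self _) (hoff i j hij)

/- The vector with coordinates `|c i|` is isotropic as well, hence orthogonal to every `x j`; for a
`j` with `c j = 0` all terms of `B (x j) (∑ i, |c i| • x i) = 0` are nonpositive. -/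
theorem eq_zero_of_sum_smul_isotropic (hB : B.IsPosSemidef) {x : ι → E}
    (hx : Function.Injective x) (hoff : ∀ i j, i ≠ j → B (x i) (x j) ≤ 0)
    (hconn : FormConnected B (Set.range x)) {c : ι → ℝ}
    (hc : B (∑ i, c i • x i) (∑ i, c i • x i) = 0) {i₀ : ι} (hi₀ : c i₀ = 0) : c = 0 := by
  by_contra hne
  obtain ⟨i₁, hi₁⟩ := Function.ne_iff.mp hne
  obtain ⟨_, ⟨i, hi, rfl⟩, _, ⟨⟨j, rfl⟩, hj⟩, hij⟩ := hconn (x '' {i | c i ≠ 0})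
    (Set.image_subset_range _ _) ⟨x i₁, i₁, hi₁, rfl⟩ fun h ↦ by
      obtain ⟨i, hi, hii₀⟩ := h.ge ⟨i₀, rfl⟩
      exact hi (hx hii₀ ▸ hi₀)
  have hcj : c j = 0 := by
    by_contra h
    exact hj ⟨j, h, rfl⟩
  have hji : j ≠ i := by
    rintro rfl
    exact hi hcj
  refine (apply_sum_abs_smul_eq_zero hB hoff hc (x j)).not_lt ?_
  simp only [map_sum, map_smul, smul_eq_mul]
  refine Finset.sum_neg' (fun k _ ↦ ?_) ⟨i, Finset.mem_univ i, ?_⟩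
  · rcases eq_or_ne j k with rfl | hjk
    · simp [hcj]
    · exact mul_nonpos_of_nonneg_of_nonpos (abs_nonneg _) (hoff j k hjk)
  · exact mul_neg_of_pos_of_neg (abs_pos.mpr hi)
      ((hoff j i hji).lt_of_ne fun h ↦ hij (hB.eq _ _ ▸ h))

end PositiveDefinite

section RealSpan

variable {E E' : Type*} [AddCommGroup E] [Module ℝ E] [AddCommGroup E'] [Module ℝ E']

theorem subset_zspan {G : Type*} [AddCommGroup G] (R : Set G) : R ⊆ zspan R :=
  AddSubgroup.subset_closure

theorem zspan_subset_span (R : Set E) : (zspan R : Set E) ⊆ Submodule.span ℝ R := by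
  rw [← Submodule.coe_toAddSubgroup, SetLike.coe_subset_coe]
  exact (AddSubgroup.closure_le _).mpr Submodule.subset_span

theorem nnspan_subset_zspan {G : Type*} [AddCommGroup G] (R : Set G) : nnspan R ⊆ zspan R :=
  AddSubgroup.le_closure_toAddSubmonoid R

theorem span_eq_span_of_zspan_eq_zspan {R R' : Set E} (h : zspan R = zspan R') :
    Submodule.span ℝ R = Submodule.span ℝ R' := by
  refine le_antisymm (Submodule.span_le.mpr ?_) (Submodule.span_le.mpr ?_)
  · exact (subset_zspan R).trans (h ▸ zspan_subset_span R')
  · exact (subset_zspan R').trans (h ▸ zspan_subset_span R)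

theorem map_zspan (f : E →ₗ[ℝ] E') (R : Set E) :
    (zspan R).map f.toAddMonoidHom = zspan (f '' R) :=
  AddMonoidHom.map_closure f.toAddMonoidHom R

theorem zspan_preimage_eq {f : E →ₗ[ℝ] E'} (hf : Function.Injective f) {R : Set E} {R' : Set E'}
    (hR' : R' ⊆ Set.range f) (h : zspan R' = zspan (f '' R)) : zspan (f ⁻¹' R') = zspan R := by
  apply AddSubgroup.map_injective (f := f.toAddMonoidHom) hf
  rw [map_zspan, map_zspan, Set.image_preimage_eq_of_subset hR', h]

theorem nnspan_inter_span {P S : Set E} (hP : LinearIndependent ℝ ((↑) : P → E)) (hSP : S ⊆ P) :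
    nnspan P ∩ Submodule.span ℝ S = nnspan S := by
  refine Set.Subset.antisymm ?_ fun x hx ↦
    ⟨AddSubmonoid.closure_mono hSP hx, zspan_subset_span S (nnspan_subset_zspan S hx)⟩
  rintro x ⟨hxP, hxS⟩
  rw [← Set.union_sdiff_cancel hSP, nnspan, AddSubmonoid.closure_union, SetLike.mem_coe,
    AddSubmonoid.mem_sup] at hxP
  obtain ⟨y, hy, z, hz, rfl⟩ := hxP
  have hyS := zspan_subset_span S (nnspan_subset_zspan S hy)
  have hdisj : Disjoint (Submodule.span ℝ S) (Submodule.span ℝ (P \ S)) := by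
    refine ((linearIndepOn_id_union_iff Set.disjoint_sdiff_right).mp ?_).2.2
    rwa [Set.union_sdiff_cancel hSP]
  have hz0 : z = 0 := Submodule.disjoint_def.mp hdisj z
    ((Submodule.add_mem_iff_right _ hyS).mp hxS)
    (zspan_subset_span _ (nnspan_subset_zspan _ hz))
  rwa [hz0, add_zero]

theorem nnspan_preimage {f : E →ₗ[ℝ] E'} (hf : Function.Injective f) {P : Set E'}
    (hP : P ⊆ Set.range f) : nnspan (f ⁻¹' P) = f ⁻¹' nnspan P := by
  have hmap : (AddSubmonoid.closure (f ⁻¹' P)).map f = AddSubmonoid.closure P := by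
    rw [AddMonoidHom.map_mclosure, Set.image_preimage_eq_of_subset hP]
  rw [nnspan, nnspan, ← hmap, ← AddSubmonoid.coe_comap, AddSubmonoid.comap_map_eq_of_injective hf]

end RealSpan

namespace IsBaseSet

variable {E E' : Type*} [AddCommGroup E] [Module ℝ E] [AddCommGroup E'] [Module ℝ E']
  {R P S : Set E} {m : ℕ}

theorem zspan_eq (h : IsBaseSet R P m) : zspan R = zspan P := by
  refine le_antisymm ((AddSubgroup.closure_le _).mpr fun β hβ ↦ ?_) (AddSubgroup.closure_mono h.1)
  rcases h.2.2.2.2.subset hβ with ⟨-, hpos⟩ | ⟨-, hneg⟩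
  · exact nnspan_subset_zspan P hpos
  · exact neg_mem_iff.mp (nnspan_subset_zspan P hneg)

theorem inter_span (h : IsBaseSet R P m) (hSP : S ⊆ P) :
    IsBaseSet (R ∩ Submodule.span ℝ S) S S.ncard := by
  obtain ⟨hPR, hPfin, -, hli, hR⟩ := h
  refine ⟨fun s hs ↦ ⟨hPR (hSP hs), Submodule.subset_span hs⟩, hPfin.subset hSP, rfl,
    LinearIndepOn.mono (v := id) (s := P) hli hSP, ?_⟩
  refine Set.Subset.antisymm (fun β hβ ↦ ?_) (Set.union_subset Set.inter_subset_left
    Set.inter_subset_left)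
  rcases hR.subset hβ.1 with ⟨-, hpos⟩ | ⟨-, hneg⟩
  · exact .inl ⟨hβ, (nnspan_inter_span hli hSP).subset ⟨hpos, hβ.2⟩⟩
  · exact .inr ⟨hβ, (nnspan_inter_span hli hSP).subset ⟨hneg, neg_mem hβ.2⟩⟩

theorem preimage {f : E →ₗ[ℝ] E'} (hf : Function.Injective f) {R' P' : Set E'}
    (h : IsBaseSet R' P' m) (hP' : P' ⊆ Set.range f) : IsBaseSet (f ⁻¹' R') (f ⁻¹' P') m := by
  obtain ⟨hPR, hPfin, hcard, hli, hR⟩ := h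
  have hneg : f ⁻¹' (-nnspan P') = -nnspan (f ⁻¹' P') := by
    ext x
    simp [nnspan_preimage hf hP']
  refine ⟨Set.preimage_mono hPR, hPfin.preimage hf.injOn,
    by rw [Set.ncard_preimage_of_injective_subset_range hf hP', hcard],
    .of_comp f (hli.comp (fun x ↦ ⟨f x, x.2⟩ : f ⁻¹' P' → P') fun x y hxy ↦
      Subtype.ext (hf (congrArg Subtype.val hxy))), ?_⟩
  rw [← hneg, nnspan_preimage hf hP', ← Set.preimage_inter, ← Set.preimage_inter,
    ← Set.preimage_union, ← hR]

theorem exists_isRootBasis (h : IsBaseSet R P m) {B : LinearMap.BilinForm ℝ E}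
    (hR : IsRootSet B R) (hspan : Submodule.span ℝ R = ⊤) :
    ∃ b : Module.Basis P ℝ E, (∀ i, b i = i) ∧ IsRootBasis B R b := by
  have hspan' := span_eq_span_of_zspan_eq_zspan h.zspan_eq
  obtain ⟨hPR, -, -, hli, hR'⟩ := h
  have htop : ⊤ ≤ Submodule.span ℝ (Set.range ((↑) : P → E)) := by
    rw [Subtype.range_val, ← hspan', hspan]
  set b := Module.Basis.mk hli htop
  have hb : ∀ i, b i = i := Module.Basis.mk_apply hli htop
  have hpos : ∀ x ∈ nnspan P, ∀ i, 0 ≤ b.repr x i := fun x hx i ↦ by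
    induction hx using AddSubmonoid.closure_induction with
    | mem x hx =>
      classical
      rw [show x = b ⟨x, hx⟩ from (hb ⟨x, hx⟩).symm, b.repr_self, Finsupp.single_apply]
      split_ifs <;> norm_num
    | zero => simp
    | add x y _ _ hx hy => simpa using add_nonneg hx hy
  refine ⟨b, hb, hR, fun i ↦ hb i ▸ hPR i.2, fun β hβ ↦ ?_⟩
  rcases hR'.subset hβ with ⟨-, hβ⟩ | ⟨-, hβ⟩
  · exact .inl (hpos β hβ)
  · exact .inr fun i ↦ by simpa using hpos _ hβ i

end IsBaseSet

section Restriction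

variable {E κ ι : Type*} [AddCommGroup E] [Module ℝ E] {B : LinearMap.BilinForm ℝ E} {R : Set E}

theorem IsRootSet.formConnected (hR : IsRootSet B R) {S : Set E} (hS : FormConnected B S)
    (hSR : S ⊆ R) {N : Set E} (hN : ∀ v ∈ N, B v = 0) (hspan : R ⊆ Submodule.span ℝ (S ∪ N)) :
    FormConnected B R := by
  refine hS.of_subset hR.isSymm hSR fun y hy ↦ ?_
  by_contra! horth
  suffices Submodule.span ℝ (S ∪ N) ≤ LinearMap.ker (B.flip y) from
    hR.nonisotropic y hy (this (hspan hy))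
  rw [Submodule.span_le, Set.union_subset_iff]
  exact ⟨horth, fun v hv ↦ by simp [hN v hv]⟩

theorem free_zspan_range {G : Type*} [AddCommGroup G] {v : ι → G} (hv : LinearIndependent ℤ v) :
    Module.Free ℤ (zspan (Set.range v)) := by
  have h := Submodule.span_int_eq_addSubgroupClosure (Set.range v)
  rw [zspan, ← h]
  exact Module.Free.of_basis (Module.Basis.span hv)

theorem finrank_zspan_range {G : Type*} [AddCommGroup G] [Finite ι] {v : ι → G}
    (hv : LinearIndependent ℤ v) : Module.finrank ℤ (zspan (Set.range v)) = Nat.card ι := by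
  have h := Submodule.span_int_eq_addSubgroupClosure (Set.range v)
  rw [zspan, ← h]
  exact Module.finrank_eq_nat_card_basis (Module.Basis.span hv)

theorem IsEARS.card_le_of_linearIndependent_int {l n : ℕ} (hE : IsEARS B R l n) [Finite ι]
    {v : ι → E} (hv : LinearIndependent ℤ v) (hmem : ∀ i, v i ∈ zspan R) :
    Nat.card ι ≤ l + n := by
  cases nonempty_fintype ι
  have := hE.free
  have : Module.Finite ℤ (zspan R) := Module.finite_of_finrank_pos <| by
    rw [hE.rank_eq]
    exact Nat.add_pos_left hE.rank_pos n
  have hv' : LinearIndependent ℤ fun i ↦ (⟨v i, hmem i⟩ : zspan R) :=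
    .of_comp (zspan R).subtype.toIntLinearMap hv
  rw [← hE.rank_eq, Nat.card_eq_fintype_card]
  exact hv'.fintype_card_le_finrank

variable [Finite κ] [Nonempty κ] {n : ℕ} {f : κ → E} {g : Fin n → E}

theorem IsRootSet.isEARS (hR : IsRootSet B R) (hconn : FormConnected B R)
    (hspan : Submodule.span ℝ R = ⊤) (hli : LinearIndependent ℝ (Sum.elim f g))
    (hz : zspan R = zspan (Set.range (Sum.elim f g))) (hg : ∀ i, B (g i) = 0)
    (hnull : ∀ v, B v v = 0 → v ∈ Submodule.span ℝ (Set.range g)) :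
    IsEARS B R (Nat.card κ) n := by
  have hcard : Nat.card (κ ⊕ Fin n) = Nat.card κ + n := by simp
  have hker : LinearMap.ker B = Submodule.span ℝ (Set.range g) :=
    le_antisymm (fun v hv ↦ hnull v (by simp [LinearMap.mem_ker.mp hv]))
      (Submodule.span_le.mpr (Set.range_subset_iff.mpr hg))
  have hlig : LinearIndependent ℝ g := hli.comp Sum.inr Sum.inr_injective
  have hliℤ : LinearIndependent ℤ (Sum.elim f g) := hli.restrict_scalars' ℤ
  let b : Module.Basis (κ ⊕ Fin n) ℝ E :=
    .mk hli (by rw [← span_eq_span_of_zspan_eq_zspan hz, hspan])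
  exact
    { rank_pos := Nat.card_pos
      findim := b.finiteDimensional_of_finite
      symm := hR.isSymm.eq
      posSemidef := hR.isPosSemidef.nonneg
      dim_eq := by rw [Module.finrank_eq_nat_card_basis b, hcard]
      null_eq := Set.Subset.antisymm (fun v hv ↦ hker ▸ hnull v hv) fun v hv ↦ by
        simp [nullSet, LinearMap.mem_ker.mp hv]
      dim_null := by
        rw [hker, finrank_span_eq_card hlig, Fintype.card_fin]
      root_nonisotropic := hR.nonisotropic
      span_eq_top := hspan
      free := hz ▸ free_zspan_range hliℤ
      rank_eq := by rw [hz, finrank_zspan_range hliℤ, hcard]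
      integral := hR.integral
      reflect := fun _ ↦ hR.srefl_image
      connected := hconn }

theorem IsRootSet.isEARS_restrict (hR : IsRootSet B R) (hconn : FormConnected B R)
    {U : Submodule ℝ E} (hU : Submodule.span ℝ R = U) (hli : LinearIndependent ℝ (Sum.elim f g))
    (hz : zspan R = zspan (Set.range (Sum.elim f g))) (hg : ∀ i, B (g i) = 0)
    (hnull : ∀ v ∈ U, B v v = 0 → v ∈ Submodule.span ℝ (Set.range g)) :
    IsEARS (B.restrict U) {x : U | (x : E) ∈ R} (Nat.card κ) n := by
  have hRU : R ⊆ Set.range U.subtype := by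
    rw [U.coe_subtype, Subtype.range_val, ← hU]
    exact Submodule.subset_span
  have hmem : ∀ i, Sum.elim f g i ∈ U := fun i ↦ by
    rw [← hU, span_eq_span_of_zspan_eq_zspan hz]
    exact Submodule.subset_span ⟨i, rfl⟩
  let f' : κ → U := fun k ↦ ⟨f k, hmem (.inl k)⟩
  let g' : Fin n → U := fun i ↦ ⟨g i, hmem (.inr i)⟩
  have hval : U.subtype ∘ Sum.elim f' g' = Sum.elim f g := by
    rw [Sum.comp_elim]
    rfl
  have himage : U.subtype '' {x : U | (x : E) ∈ R} = R := Set.image_preimage_eq_of_subset hRU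
  refine (hR.preimage (f := U.subtype) fun _ _ ↦ rfl).isEARS (f := f') (g := g') ?_ ?_ ?_ ?_ ?_ ?_
  · exact .of_image U.injective_subtype (fun _ _ ↦ rfl) (himage.symm ▸ hconn)
  · apply Submodule.map_injective_of_injective U.injective_subtype
    rw [Submodule.map_span, himage, Submodule.map_subtype_top, hU]
  · exact .of_comp U.subtype (hval ▸ hli)
  · apply zspan_preimage_eq U.injective_subtype hRU
    rw [hz, ← hval, Set.range_comp]
  · intro i
    ext x
    simp [g', hg]
  · intro v hv
    have hvg : (v : E) ∈ (Submodule.span ℝ (Set.range g')).map U.subtype := by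
      rw [Submodule.map_span, ← Set.range_comp]
      exact hnull v v.2 hv
    exact U.injective_subtype.mem_set_image.mp hvg

end Restriction

theorem linearIndependent_sumElim_of_comp {A E E' κ ι : Type*} [Ring A] [AddCommGroup E]
    [Module A E] [AddCommGroup E'] [Module A E'] {f : E →ₗ[A] E'} {v : κ → E} {u : ι → E}
    (hv : LinearIndependent A (f ∘ v)) (hu : LinearIndependent A u) (hfu : ∀ i, f (u i) = 0) :
    LinearIndependent A (Sum.elim v u) := by
  refine hv.of_comp.sum_type hu ((Submodule.range_ker_disjoint hv).mono_right ?_)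
  exact Submodule.span_le.mpr (Set.range_subset_iff.mpr hfu)

theorem span_singleton_nsmul {E : Type*} [AddCommGroup E] [Module ℝ E] {k : ℕ} (hk : k ≠ 0)
    (a : E) : ℝ ∙ (k • a) = ℝ ∙ a := by
  rw [← Nat.cast_smul_eq_nsmul ℝ]
  exact Submodule.span_singleton_smul_eq (Nat.cast_ne_zero.mpr hk).isUnit a

theorem comap_mkQ_span_image {V : Type*} [AddCommGroup V] [Module ℝ V] (a : V)
    (S : Set V) :
    (Submodule.span ℝ ((ℝ ∙ a).mkQ '' S)).comap (ℝ ∙ a).mkQ = Submodule.span ℝ (insert a S) := by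
  rw [← Submodule.map_span, Submodule.comap_map_mkQ, Submodule.span_insert]

theorem image_mkQ_inter_span {V : Type*} [AddCommGroup V] [Module ℝ V] (a : V)
    (R S : Set V) :
    (ℝ ∙ a).mkQ '' (R ∩ Submodule.span ℝ (insert a S)) =
      (ℝ ∙ a).mkQ '' R ∩ Submodule.span ℝ ((ℝ ∙ a).mkQ '' S) := by
  rw [← comap_mkQ_span_image, Submodule.comap_coe, Set.image_inter_preimage]

namespace IsFundamentalSet

variable {V : Type*} [AddCommGroup V] [Module ℝ V] {B : LinearMap.BilinForm ℝ V} {R P S : Set V}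
  {l : ℕ} {a : V}

theorem ne_zero (h : IsFundamentalSet B R l P a) : a ≠ 0 := by
  rintro rfl
  obtain ⟨-, -, ⟨b, -, -, -, hind⟩, -⟩ := h
  exact one_ne_zero (hind 1 0 (by simp)).1

theorem subset (h : IsFundamentalSet B R l P a) : P ⊆ R := h.2.2.2.1

theorem isBaseSet_image_mkQ (h : IsFundamentalSet B R l P a) :
    IsBaseSet ((ℝ ∙ a).mkQ '' R) ((ℝ ∙ a).mkQ '' P) (l + 1) := h.2.2.2.2.2.2

theorem injOn_mkQ (h : IsFundamentalSet B R l P a) : Set.InjOn (ℝ ∙ a).mkQ P := by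
  obtain ⟨-, -, -, -, hfin, hcard, -, -, hcard', -, -⟩ := h
  exact Set.injOn_of_ncard_image_eq (hcard'.trans hcard.symm) hfin

theorem linearIndepOn_mkQ (h : IsFundamentalSet B R l P a) : LinearIndepOn ℝ (ℝ ∙ a).mkQ P :=
  (linearIndepOn_iff_image h.injOn_mkQ).mpr h.isBaseSet_image_mkQ.2.2.2.1

theorem apply_eq_zero (h : IsFundamentalSet B R l P a) (hE : IsEARS B R l 2) : B a = 0 :=
  LinearMap.mem_ker.mp (hE.null_eq.subset h.2.1)

theorem apply_eq_zero_of_mem_span (h : IsFundamentalSet B R l P a) (hE : IsEARS B R l 2) {v : V}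
    (hv : v ∈ ℝ ∙ a) : B v = 0 := by
  obtain ⟨c, rfl⟩ := Submodule.mem_span_singleton.mp hv
  rw [map_smul, h.apply_eq_zero hE, smul_zero]

theorem exists_form_quotient (h : IsFundamentalSet B R l P a) (hE : IsEARS B R l 2) :
    ∃ BQ : LinearMap.BilinForm ℝ (V ⧸ ℝ ∙ a),
      ∀ x y, BQ ((ℝ ∙ a).mkQ x) ((ℝ ∙ a).mkQ y) = B x y :=
  ⟨quotFormBy B (ℝ ∙ a) (fun _ ↦ h.apply_eq_zero_of_mem_span hE) hE.symm, fun _ _ ↦ rfl⟩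

theorem not_linearIndependent_int (h : IsFundamentalSet B R l P a) (hE : IsEARS B R l 2) {b : V}
    (hbR : b ∈ zspan R) (hba : b ∈ ℝ ∙ a) : ¬LinearIndependent ℤ ![a, b] := by
  intro hab
  have hli : LinearIndependent ℤ (Sum.elim ((↑) : P → V) ![a, b]) := by
    refine linearIndependent_sumElim_of_comp (f := (ℝ ∙ a).mkQ.restrictScalars ℤ)
      (LinearIndependent.restrict_scalars' ℤ h.linearIndepOn_mkQ) hab fun i ↦ ?_
    fin_cases i
    · simp
    · simpa using hba
  have hmem : ∀ i, Sum.elim ((↑) : P → V) ![a, b] i ∈ zspan R := by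
    rintro (p | i)
    · exact subset_zspan R (h.subset p.2)
    · fin_cases i
      exacts [h.1, hbR]
  have := h.2.2.2.2.1.to_subtype
  have hcard := hE.card_le_of_linearIndependent_int hli hmem
  rw [Nat.card_sum, Nat.card_coe_set_eq, h.2.2.2.2.2.1, Nat.card_fin] at hcard
  lia

theorem zspan_inf_span_le (h : IsFundamentalSet B R l P a) (hE : IsEARS B R l 2) :
    zspan R ⊓ (ℝ ∙ a).toAddSubgroup ≤ AddSubgroup.zmultiples a := by
  rintro v ⟨hvR, hva⟩
  obtain ⟨b, hbR, -, hnull, hind⟩ := h.2.2.1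
  have hv : B v v = 0 := by rw [h.apply_eq_zero_of_mem_span hE hva, LinearMap.zero_apply]
  obtain ⟨m, n, rfl⟩ := hnull.subset ⟨hvR, hv⟩
  have hab : LinearIndependent ℤ ![a, b] := LinearIndependent.pair_iff.mpr hind
  have hn : n = 0 := by
    by_contra hn
    refine h.not_linearIndependent_int hE hbR ?_ hab
    have hnb := (Submodule.add_mem_iff_right _
      (zsmul_mem (Submodule.mem_span_singleton_self a) m)).mp hva
    rw [← Int.cast_smul_eq_zsmul ℝ] at hnb
    exact (Submodule.smul_mem_iff _ (Int.cast_ne_zero.mpr hn)).mp hnb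
  exact ⟨m, by simp [hn]⟩

variable {BQ : LinearMap.BilinForm ℝ (V ⧸ ℝ ∙ a)}

theorem exists_isRootBasis (h : IsFundamentalSet B R l P a) (hE : IsEARS B R l 2)
    (hBQ : ∀ x y, BQ ((ℝ ∙ a).mkQ x) ((ℝ ∙ a).mkQ y) = B x y) :
    ∃ b : Module.Basis ((ℝ ∙ a).mkQ '' P) ℝ (V ⧸ ℝ ∙ a),
      (∀ i, b i = i) ∧ IsRootBasis BQ ((ℝ ∙ a).mkQ '' R) b := by
  refine h.isBaseSet_image_mkQ.exists_isRootBasis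
    (hE.isRootSet.image (Submodule.mkQ_surjective _) hBQ) ?_
  rw [← Submodule.map_span, hE.span_eq_top, Submodule.map_top, Submodule.range_mkQ]

theorem exists_ne_mkQ_eq (h : IsFundamentalSet B R l P a) (hE : IsEARS B R l 2) {α : V}
    (hα : α ∈ R) : ∃ β ∈ R, β ≠ α ∧ (ℝ ∙ a).mkQ β = (ℝ ∙ a).mkQ α := by
  obtain ⟨BQ, hBQ⟩ := h.exists_form_quotient hE
  refine hE.isRootSet.exists_ne_map_eq hE.connected hBQ (fun hinj ↦ h.ne_zero ?_) hα
  obtain ⟨b, -, hb⟩ := h.exists_isRootBasis hE hBQ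
  have := h.isBaseSet_image_mkQ.2.1.to_subtype
  apply hb.injective_of_injOn hE.isRootSet hBQ hE.span_eq_top hinj
  simp

theorem subset_inter_span (h : IsFundamentalSet B R l P a) (hSP : S ⊆ P) :
    S ⊆ R ∩ Submodule.span ℝ (insert a S) := fun _ hs ↦
  ⟨h.subset (hSP hs), Submodule.subset_span (Set.mem_insert_of_mem a hs)⟩

theorem isBaseSet_image_mkQ_inter_span (h : IsFundamentalSet B R l P a) (hSP : S ⊆ P) :
    IsBaseSet ((ℝ ∙ a).mkQ '' (R ∩ Submodule.span ℝ (insert a S))) ((ℝ ∙ a).mkQ '' S) S.ncard := by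
  rw [image_mkQ_inter_span, ← (h.injOn_mkQ.mono hSP).ncard_image]
  exact h.isBaseSet_image_mkQ.inter_span (Set.image_mono hSP)

/- In the quotient by `ℝa` the claim concerns isotropic combinations of simple roots in which some
simple root is missing. -/
theorem mem_span_singleton_of_isotropic (h : IsFundamentalSet B R l P a) (hE : IsEARS B R l 2)
    (hSP : S ⊂ P) {v : V} (hv : v ∈ Submodule.span ℝ (insert a S)) (hvv : B v v = 0) :
    v ∈ ℝ ∙ a := by
  obtain ⟨BQ, hBQ⟩ := h.exists_form_quotient hE
  obtain ⟨b, hbi, hb⟩ := h.exists_isRootBasis hE hBQ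
  have := h.isBaseSet_image_mkQ.2.1.fintype
  obtain ⟨p, hpP, hpS⟩ := Set.exists_of_ssubset hSP
  have hqv : (ℝ ∙ a).mkQ v ∈ Submodule.span ℝ (b '' {i | (i : V ⧸ ℝ ∙ a) ∈ (ℝ ∙ a).mkQ '' S}) := by
    rw [← comap_mkQ_span_image, Submodule.mem_comap] at hv
    refine Submodule.span_mono (fun x hx ↦ ?_) hv
    exact ⟨⟨x, Set.image_mono hSP.subset hx⟩, hx, hbi _⟩
  have hrepr : b.repr ((ℝ ∙ a).mkQ v) ⟨_, p, hpP, rfl⟩ = 0 := by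
    by_contra hne
    obtain ⟨s, hs, hsp⟩ := b.mem_span_image.mp hqv (Finsupp.mem_support_iff.mpr hne)
    exact hpS (h.injOn_mkQ (hSP.subset hs) hpP hsp ▸ hs)
  have hzero := eq_zero_of_sum_smul_isotropic hb.isPosSemidef b.injective
    (fun i j ↦ hb.apply_basis_nonpos)
    (hb.formConnected_range (FormConnected.image hE.connected hBQ))
    (by rw [b.sum_repr, hBQ, hvv]) hrepr
  rw [← Submodule.ker_mkQ (ℝ ∙ a), LinearMap.mem_ker]
  exact b.ext_elem fun i ↦ by simpa using congrFun hzero i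

theorem zspan_inter_span_eq_sup_inf (h : IsFundamentalSet B R l P a) (hSP : S ⊆ P) :
    zspan (R ∩ Submodule.span ℝ (insert a S)) = zspan S ⊔
      (ℝ ∙ a).toAddSubgroup ⊓ zspan (R ∩ Submodule.span ℝ (insert a S)) := by
  set L := zspan (R ∩ Submodule.span ℝ (insert a S))
  have hSL : zspan S ≤ L := AddSubgroup.closure_mono (h.subset_inter_span hSP)
  have hmap : L.map (ℝ ∙ a).mkQ.toAddMonoidHom = (zspan S).map (ℝ ∙ a).mkQ.toAddMonoidHom := by
    rw [map_zspan, map_zspan, (h.isBaseSet_image_mkQ_inter_span hSP).zspan_eq]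
  have hker : (ℝ ∙ a).mkQ.toAddMonoidHom.ker = (ℝ ∙ a).toAddSubgroup := by
    ext x
    simp [AddMonoidHom.mem_ker]
  have hL : L ≤ zspan S ⊔ (ℝ ∙ a).toAddSubgroup := by
    rw [← hker, ← AddSubgroup.comap_map_eq, ← hmap]
    exact AddSubgroup.le_comap_map _ _
  rw [← sup_inf_assoc_of_le _ hSL, inf_eq_right.mpr hL]

theorem exists_zspan_inter_span_eq_sup (h : IsFundamentalSet B R l P a) (hE : IsEARS B R l 2)
    (hSP : S ⊆ P) (hS : S.Nonempty) :
    ∃ k : ℕ, 0 < k ∧ zspan (R ∩ Submodule.span ℝ (insert a S)) =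
      zspan S ⊔ AddSubgroup.zmultiples (k • a) := by
  set W := Submodule.span ℝ (insert a S)
  have hle : (ℝ ∙ a).toAddSubgroup ⊓ zspan (R ∩ W) ≤ AddSubgroup.zmultiples a :=
    (le_inf (inf_le_right.trans (AddSubgroup.closure_mono Set.inter_subset_left))
      inf_le_left).trans (h.zspan_inf_span_le hE)
  obtain ⟨k, hk⟩ := (AddSubgroup.le_zmultiples_iff _ _).mp hle
  refine ⟨k, Nat.pos_of_ne_zero ?_, hk ▸ h.zspan_inter_span_eq_sup_inf hSP⟩
  rintro rfl
  obtain ⟨s, hs⟩ := hS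
  obtain ⟨hsR, hsW⟩ := h.subset_inter_span hSP hs
  obtain ⟨β, hβR, hβs, hq⟩ := h.exists_ne_mkQ_eq hE hsR
  have hmem : β - s ∈ ℝ ∙ a := (Submodule.Quotient.eq _).mp hq
  have haW : ℝ ∙ a ≤ W := Submodule.span_mono (by simp)
  have hβW : β ∈ W := (Submodule.sub_mem_iff_left _ hsW).mp (haW hmem)
  have hzero : β - s ∈ AddSubgroup.zmultiples (0 • a) :=
    hk ▸ ⟨hmem, AddSubgroup.sub_mem _ (subset_zspan _ ⟨hβR, hβW⟩)
      (subset_zspan _ ⟨hsR, hsW⟩)⟩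
  exact hβs (sub_eq_zero.mp (by simpa using hzero))

theorem linearIndependent_sumElim (h : IsFundamentalSet B R l P a) (hSP : S ⊆ P) {k : ℕ}
    (hk : k ≠ 0) : LinearIndependent ℝ (Sum.elim ((↑) : S → V) fun _ : Fin 1 ↦ k • a) := by
  refine linearIndependent_sumElim_of_comp (f := (ℝ ∙ a).mkQ) (h.linearIndepOn_mkQ.mono hSP)
    (.of_subsingleton 0 ?_) fun _ ↦ (Submodule.Quotient.mk_eq_zero _).mpr
      (nsmul_mem (Submodule.mem_span_singleton_self a) k)
  rw [← Nat.cast_smul_eq_nsmul ℝ]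
  exact smul_ne_zero (Nat.cast_ne_zero.mpr hk) h.ne_zero

theorem formConnected_inter_span (h : IsFundamentalSet B R l P a) (hE : IsEARS B R l 2)
    (hSP : S ⊆ P) (hScon : FormConnected B S) :
    FormConnected B (R ∩ Submodule.span ℝ (insert a S)) := by
  refine (hE.isRootSet.inter_submodule _).formConnected hScon (h.subset_inter_span hSP) (N := {a})
    (by simpa using h.apply_eq_zero hE) ?_
  rw [Set.union_singleton]
  exact Set.inter_subset_right

theorem isEARS_restrict_span (h : IsFundamentalSet B R l P a) (hE : IsEARS B R l 2)
    (hSP : S ⊂ P) (hS : S.Nonempty) (hScon : FormConnected B S) :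
    IsEARS (B.restrict (Submodule.span ℝ (insert a S)))
      {x : Submodule.span ℝ (insert a S) | (x : V) ∈ R} S.ncard 1 := by
  obtain ⟨k, hk, hz⟩ := h.exists_zspan_inter_span_eq_sup hE hSP.subset hS
  have hz' : zspan (R ∩ Submodule.span ℝ (insert a S)) =
      zspan (Set.range (Sum.elim ((↑) : S → V) fun _ : Fin 1 ↦ k • a)) := by
    rw [hz, Set.Sum.elim_range, Subtype.range_val, Set.range_const, zspan, zspan,
      AddSubgroup.closure_union, AddSubgroup.zmultiples_eq_closure]
  have hspan : Submodule.span ℝ (R ∩ Submodule.span ℝ (insert a S)) =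
      Submodule.span ℝ (insert a S) := by
    rw [span_eq_span_of_zspan_eq_zspan hz', Set.Sum.elim_range, Subtype.range_val, Set.range_const,
      Submodule.span_union, Submodule.span_insert, sup_comm, span_singleton_nsmul hk.ne']
  have := (h.2.2.2.2.1.subset hSP.subset).to_subtype
  have := hS.to_subtype
  have hmain := (hE.isRootSet.inter_submodule _).isEARS_restrict
    (h.formConnected_inter_span hE hSP.subset hScon) hspan
    (h.linearIndependent_sumElim hSP.subset hk.ne') hz' (by simp [h.apply_eq_zero hE])
    fun v hv hvv ↦ by
      rw [Set.range_const, span_singleton_nsmul hk.ne']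
      exact h.mem_span_singleton_of_isotropic hE hSP hv hvv
  simpa [Nat.card_coe_set_eq] using hmain

theorem isEARS_restrict_span_image (h : IsFundamentalSet B R l P a) (hE : IsEARS B R l 2)
    (hBQ : ∀ x y, BQ ((ℝ ∙ a).mkQ x) ((ℝ ∙ a).mkQ y) = B x y) (hSP : S ⊂ P) (hS : S.Nonempty)
    (hScon : FormConnected B S) {T : Set (V ⧸ ℝ ∙ a)}
    (hT : T = (ℝ ∙ a).mkQ '' (R ∩ Submodule.span ℝ (insert a S))) :
    IsEARS (BQ.restrict (Submodule.span ℝ T)) {x : Submodule.span ℝ T | (x : V ⧸ ℝ ∙ a) ∈ T}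
      S.ncard 0 := by
  have hz : zspan T = zspan ((ℝ ∙ a).mkQ '' S) :=
    hT ▸ (h.isBaseSet_image_mkQ_inter_span hSP.subset).zspan_eq
  have hz' : zspan T = zspan (Set.range
      (Sum.elim (fun s : S ↦ (ℝ ∙ a).mkQ s) (Fin.elim0 : Fin 0 → V ⧸ ℝ ∙ a))) := by
    rw [hz, Set.Sum.elim_range, Set.range_eq_empty Fin.elim0, Set.union_empty, Set.image_eq_range]
  have := (h.2.2.2.2.1.subset hSP.subset).to_subtype
  have := hS.to_subtype
  rw [← Nat.card_coe_set_eq]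
  refine IsRootSet.isEARS_restrict (f := fun s : S ↦ (ℝ ∙ a).mkQ s) (g := Fin.elim0)
    ?_ ?_ rfl ?_ hz' finZeroElim ?_
  · exact hT ▸ (hE.isRootSet.inter_submodule _).image (Submodule.mkQ_surjective _) hBQ
  · exact hT ▸ (h.formConnected_inter_span hE hSP.subset hScon).image hBQ
  · exact linearIndependent_sumElim_of_comp (f := LinearMap.id)
      (h.linearIndepOn_mkQ.mono hSP.subset) linearIndependent_empty_type finZeroElim
  · intro v hv hvv
    rw [span_eq_span_of_zspan_eq_zspan hz] at hv
    obtain ⟨w, rfl⟩ := Submodule.mkQ_surjective _ v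
    rw [← Submodule.mem_comap, comap_mkQ_span_image] at hv
    have hw := h.mem_span_singleton_of_isotropic hE hSP hv (hBQ w w ▸ hvv)
    rw [← Submodule.ker_mkQ (ℝ ∙ a), LinearMap.mem_ker] at hw
    rw [hw]
    exact zero_mem _

theorem isBaseSet_preimage_image (h : IsFundamentalSet B R l P a) (hSP : S ⊆ P)
    {T : Set (V ⧸ ℝ ∙ a)} (hT : T = (ℝ ∙ a).mkQ '' (R ∩ Submodule.span ℝ (insert a S))) :
    IsBaseSet {x : Submodule.span ℝ T | (x : V ⧸ ℝ ∙ a) ∈ T}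
      {x : Submodule.span ℝ T | (x : V ⧸ ℝ ∙ a) ∈ (ℝ ∙ a).mkQ '' S} S.ncard := by
  have hbase : IsBaseSet T ((ℝ ∙ a).mkQ '' S) S.ncard := hT ▸ h.isBaseSet_image_mkQ_inter_span hSP
  refine hbase.preimage (f := (Submodule.span ℝ T).subtype) (Submodule.injective_subtype _) ?_
  rw [Submodule.coe_subtype, Subtype.range_val]
  exact hbase.1.trans Submodule.subset_span

theorem eq_zero_of_add_zsmul_eq_zero (h : IsFundamentalSet B R l P a) (hSP : S ⊆ P) {μ : V}
    (hμ : μ ∈ zspan S) {n : ℤ} (hn : μ + n • a = 0) : μ = 0 ∧ n = 0 := by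
  have hdisj := Submodule.range_ker_disjoint (h.linearIndepOn_mkQ.mono hSP)
  rw [Submodule.ker_mkQ, Subtype.range_val] at hdisj
  have hμa : μ ∈ ℝ ∙ a := eq_neg_of_add_eq_zero_left hn ▸
    neg_mem (zsmul_mem (Submodule.mem_span_singleton_self a) n)
  have hμ0 : μ = 0 := Submodule.disjoint_def.mp hdisj μ (zspan_subset_span S hμ) hμa
  refine ⟨hμ0, ?_⟩
  rw [hμ0, zero_add, ← Int.cast_smul_eq_zsmul ℝ, smul_eq_zero, Int.cast_eq_zero] at hn
  exact hn.resolve_right h.ne_zero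

end IsFundamentalSet

/-- For a nonempty proper connected subset `S ⊆ Π` of a fundamental-set
of a reduced elliptic root system: `(R^S, V^S)` is a reduced affine root system,
`π_a(R^S)` is an irreducible finite root system with base `π_a(S)`, and
`ℤR^S = ℤS ⊕ ℤ k_S a` for some positive integer `k_S`. -/
theorem stmt7 {V : Type*} [AddCommGroup V] [Module ℝ V]
    (B : LinearMap.BilinForm ℝ V) (R : Set V) (l : ℕ)
    (hE : IsEARS B R l 2) (hred : IsReducedRS R)
    (P : Set V) (a : V) (hfs : IsFundamentalSet B R l P a)
    (S : Set V) (hSP : S ⊆ P) (hSne : S.Nonempty) (hSproper : S ≠ P)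
    (hScon : ∀ S' ⊆ S, S'.Nonempty → S' ≠ S → ∃ x ∈ S', ∃ y ∈ S \ S', B x y ≠ 0) :
    -- `(R^S, V^S)` is a reduced affine root system (of rank `|S|`)
    (IsEARS (LinearMap.BilinForm.restrict B (Submodule.span ℝ (insert a S)))
        {x : (Submodule.span ℝ (insert a S)) | (x : V) ∈ R} S.ncard 1 ∧
      IsReducedRS {x : (Submodule.span ℝ (insert a S)) | (x : V) ∈ R}) ∧
    -- `π_a(R^S)` is an irreducible finite root system in `V/ℝa` with base `π_a(S)`
    (IsEARS
        (LinearMap.BilinForm.restrict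
          (quotFormBy B (Submodule.span ℝ {a})
            (fun w hw => by
              obtain ⟨c, rfl⟩ := Submodule.mem_span_singleton.mp hw
              have haa : a ∈ nullSet B := hfs.2.1
              rw [hE.null_eq] at haa
              ext v
              simp [LinearMap.mem_ker.mp haa])
            hE.symm)
          (Submodule.span ℝ ((Submodule.span ℝ {a}).mkQ ''
            (R ∩ (Submodule.span ℝ (insert a S) : Set V)))))
        {x : (Submodule.span ℝ ((Submodule.span ℝ {a}).mkQ ''
            (R ∩ (Submodule.span ℝ (insert a S) : Set V)))) |
          (x : V ⧸ Submodule.span ℝ {a}) ∈ (Submodule.span ℝ {a}).mkQ ''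
            (R ∩ (Submodule.span ℝ (insert a S) : Set V))} S.ncard 0 ∧
      IsBaseSet
        {x : (Submodule.span ℝ ((Submodule.span ℝ {a}).mkQ ''
            (R ∩ (Submodule.span ℝ (insert a S) : Set V)))) |
          (x : V ⧸ Submodule.span ℝ {a}) ∈ (Submodule.span ℝ {a}).mkQ ''
            (R ∩ (Submodule.span ℝ (insert a S) : Set V))}
        {x : (Submodule.span ℝ ((Submodule.span ℝ {a}).mkQ ''
            (R ∩ (Submodule.span ℝ (insert a S) : Set V)))) |
          (x : V ⧸ Submodule.span ℝ {a}) ∈ (Submodule.span ℝ {a}).mkQ '' S}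
        S.ncard) ∧
    -- `ℤR^S = ℤS ⊕ ℤ k_S a`
    (∃ kS : ℕ, 0 < kS ∧
      (zspan (R ∩ (Submodule.span ℝ (insert a S) : Set V)) : Set V)
        = {v | ∃ μ ∈ AddSubgroup.closure S, ∃ m : ℤ, v = μ + (m * kS) • a} ∧
      (∀ μ ∈ AddSubgroup.closure S, ∀ m : ℤ,
        μ + ((m * kS : ℤ)) • a = 0 → μ = 0 ∧ m = 0)) := by
  have hSP' : S ⊂ P := hSP.ssubset_of_ne hSproper
  obtain ⟨k, hk, hz⟩ := hfs.exists_zspan_inter_span_eq_sup hE hSP hSne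
  refine ⟨⟨hfs.isEARS_restrict_span hE hSP' hSne hScon, fun α hα ↦ hred α hα⟩,
    ⟨hfs.isEARS_restrict_span_image hE (fun _ _ ↦ rfl) hSP' hSne hScon rfl,
      hfs.isBaseSet_preimage_image hSP rfl⟩, k, hk, ?_, fun μ hμ m hm ↦ ?_⟩
  · ext v
    rw [hz, SetLike.mem_coe, AddSubgroup.mem_sup]
    simp only [AddSubgroup.mem_zmultiples_iff, mul_smul, natCast_zsmul]
    exact ⟨fun ⟨μ, hμ, _, ⟨m, rfl⟩, h⟩ ↦ ⟨μ, hμ, m, h.symm⟩,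
      fun ⟨μ, hμ, m, h⟩ ↦ ⟨μ, hμ, _, ⟨m, rfl⟩, h.symm⟩⟩
  · obtain ⟨hμ0, hm0⟩ := hfs.eq_zero_of_add_zsmul_eq_zero hSP hμ hm
    exact ⟨hμ0, by simpa [hk.ne'] using hm0⟩
end
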